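/- Let L > 0, Ω = (−L,L)^d, Q = Ω × [0,1], and let ρ_0, ρ_1 : ℝ^d → [0,1] be measurable with compact support contained in Ω and equal positive integrals. Let ψ : ℝ^d → ℝ be convex and T Borel with ∇ψ(x) = T(x) for Lebesgue-a.e. x and T_#(ρ_0 dx) = ρ_1 dx, and let μ_t = ((1−t)·id + t·T)_#(ρ_0 dx). Call a pair (c, v) admissible if c : Q → [0,1] and v : Q → ℝ^d are measurable, ∫_Q c|v|² dx dt < ∞, and for every function φ continuously differentiable on the closure of Q, ∫_0^1 ∫_Ω c (∂_t φ + v·∇φ) dx dt = ∫_Ω ρ_1(x) φ(x,1) dx − ∫_Ω ρ_0(x) φ(x,0) dx. Then the infimum of the relaxed action K(c,v) = ∫_0^1 ∫_Ω ½ c |v|² dx dt over admissible pairs equals ½ d_W(ρ_0 dx, ρ_1 dx)²; this infimum is attained by an admissible pair (c,v) with c(·,t) dx = μ_t for all t ∈ [0,1]; and moreover every minimizing admissible pair (c,v) satisfies c(·,t) dx = μ_t for a.e. t ∈ [0,1]. -/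

import Mathlib

open Set MeasureTheory
open scoped ENNReal RealInnerProductSpace

/-- The squared quadratic Wasserstein cost between two measures on `ℝ^d`: the infimum
over couplings of the integral of `|x − y|²`. -/
noncomputable def W2sq {d : ℕ}
    (μ ν : Measure (EuclideanSpace ℝ (Fin d))) : ℝ≥0∞ :=
  sInf { C | ∃ π : Measure (EuclideanSpace ℝ (Fin d) × EuclideanSpace ℝ (Fin d)),
    π.map Prod.fst = μ ∧ π.map Prod.snd = ν ∧
    C = ∫⁻ q, ENNReal.ofReal (‖q.1 - q.2‖ ^ 2) ∂π }

/-- The open box `Ω = (−L,L)^d` in `ℝ^d`. -/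
def box (d : ℕ) (L : ℝ) : Set (EuclideanSpace ℝ (Fin d)) :=
  { x | ∀ j, x j ∈ Ioo (-L) L }

/-- Admissibility for the relaxed two-fluid (fluid–vacuum) least-action principle in the
box `Ω = (−L,L)^d`: the concentration `c` takes values in `[0,1]` on `Q = Ω × [0,1]`, the
action is finite, and the weak transport constraint with no-flux boundary and endpoint
data `ρ₀, ρ₁` holds against all test functions `φ` that are `C¹` on the closure of `Q`
(here: restrictions of globally `C¹` functions). -/
def RelaxedAdmissible {d : ℕ} (L : ℝ) (ρ₀ ρ₁ : EuclideanSpace ℝ (Fin d) → ℝ)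
    (c : EuclideanSpace ℝ (Fin d) → ℝ → ℝ)
    (v : EuclideanSpace ℝ (Fin d) → ℝ → EuclideanSpace ℝ (Fin d)) : Prop :=
  Measurable (fun q : EuclideanSpace ℝ (Fin d) × ℝ => c q.1 q.2) ∧
  Measurable (fun q : EuclideanSpace ℝ (Fin d) × ℝ => v q.1 q.2) ∧
  (∀ x ∈ box d L, ∀ t ∈ Icc (0:ℝ) 1, c x t ∈ Icc (0:ℝ) 1) ∧
  (∫⁻ t in Icc (0:ℝ) 1, ∫⁻ x in box d L,
      ENNReal.ofReal (c x t * ‖v x t‖ ^ 2)) < ⊤ ∧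
  ∀ φ : EuclideanSpace ℝ (Fin d) → ℝ → ℝ,
    ContDiff ℝ 1 (fun z : EuclideanSpace ℝ (Fin d) × ℝ => φ z.1 z.2) →
    (∫ t in Icc (0:ℝ) 1, ∫ x in box d L, c x t *
        (deriv (fun s => φ x s) t + ⟪v x t, gradient (fun y => φ y t) x⟫)) =
      (∫ x in box d L, ρ₁ x * φ x 1) - (∫ x in box d L, ρ₀ x * φ x 0)

section conj
variable {E : Type*} [NormedAddCommGroup E] [InnerProductSpace ℝ E]

/-- A bounded Lipschitz perturbation with semiconvexity constant `C`. -/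
structure GoodEta (η : E → ℝ) (C : ℝ) : Prop where
  bdd : ∀ z, |η z| ≤ 1
  nonneg : 0 ≤ C
  lip : ∀ z w, |η z - η w| ≤ C * ‖z - w‖
  conv : ∀ k : ℝ, ConvexOn ℝ univ (fun z => k * η z + |k| * C / 2 * ‖z‖ ^ 2)

/-- Convex function with an affine minorant. -/
structure GoodPsi (ψ : E → ℝ) : Prop where
  conv : ConvexOn ℝ univ ψ
  cont : Continuous ψ
  minor : ∃ (a : ℝ) (p : E), ∀ z, a + ⟪p, z⟫ ≤ ψ z

/-- The functional to be maximised in the (perturbed) Legendre transform. -/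
noncomputable def Ufun (ψ η : E → ℝ) (q : E × ℝ × ℝ) (z : E) : ℝ :=
  ⟪q.1, z⟫ - q.2.1 * ‖z‖ ^ 2 / 2 - q.2.2 * η z - ψ z

/-- Maximiser. -/
noncomputable def Smax (ψ η : E → ℝ) (q : E × ℝ × ℝ) : E :=
  Classical.epsilon (fun z => ∀ w, Ufun ψ η q w ≤ Ufun ψ η q z)

/-- Perturbed Legendre transform. -/
noncomputable def Gfun (ψ η : E → ℝ) (q : E × ℝ × ℝ) : ℝ := Ufun ψ η q (Smax ψ η q)

def Udom (E : Type*) (C : ℝ) : Set (E × ℝ × ℝ) := {q | |q.2.2| * C < q.2.1}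

theorem GoodEta.continuous {η : E → ℝ} {C : ℝ} (h : GoodEta η C) : Continuous η := by
  have : LipschitzWith (Real.toNNReal C) η := by
    apply LipschitzWith.of_dist_le_mul
    intro x y
    rw [Real.dist_eq, dist_eq_norm, Real.coe_toNNReal _ h.nonneg]
    exact h.lip x y
  exact this.continuous

theorem isOpen_Udom (C : ℝ) : IsOpen (Udom E C) := by
  apply isOpen_lt
  · fun_prop
  · fun_prop

theorem Ufun_continuous {ψ η : E → ℝ} {C : ℝ} (hψ : GoodPsi ψ) (hη : GoodEta η C)
    (q : E × ℝ × ℝ) : Continuous (Ufun ψ η q) := by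
  have := hψ.cont
  have := hη.continuous
  unfold Ufun
  fun_prop

theorem exists_max [FiniteDimensional ℝ E] {ψ η : E → ℝ} {C : ℝ} (hψ : GoodPsi ψ)
    (hη : GoodEta η C) {q : E × ℝ × ℝ} (hq : q ∈ Udom E C) :
    ∃ z, ∀ w, Ufun ψ η q w ≤ Ufun ψ η q z := by
  apply (Ufun_continuous hψ hη q).exists_forall_ge
  obtain ⟨a, p, hp⟩ := hψ.minor
  have ha : 0 < q.2.1 := lt_of_le_of_lt (mul_nonneg (abs_nonneg _) hη.nonneg) hq
  -- upper bound
  have hub : ∀ z, Ufun ψ η q z ≤ (‖q.1‖ + ‖p‖) * ‖z‖ - q.2.1 / 2 * ‖z‖ ^ 2 + (|q.2.2| - a) := by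
    intro z
    have h1 := hp z
    have h2 := real_inner_le_norm q.1 z
    have h3 : -⟪p, z⟫ ≤ ‖p‖ * ‖z‖ := by
      have := real_inner_le_norm (-p) z
      rwa [inner_neg_left, norm_neg] at this
    have h4 : -(q.2.2 * η z) ≤ |q.2.2| := by
      calc -(q.2.2 * η z) ≤ |q.2.2 * η z| := neg_le_abs _
        _ = |q.2.2| * |η z| := abs_mul _ _
        _ ≤ |q.2.2| * 1 := by gcongr; exact hη.bdd z
        _ = _ := mul_one _
    unfold Ufun
    nlinarith
  refine Filter.tendsto_atBot_mono hub ?_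
  have key : Filter.Tendsto (fun r : ℝ => (‖q.1‖ + ‖p‖) * r - q.2.1 / 2 * r ^ 2 + (|q.2.2| - a))
      Filter.atTop Filter.atBot := by
    have : (fun r : ℝ => (‖q.1‖ + ‖p‖) * r - q.2.1 / 2 * r ^ 2 + (|q.2.2| - a))
        = fun r => r * ((‖q.1‖ + ‖p‖) - q.2.1 / 2 * r) + (|q.2.2| - a) := by
      ext r; ring
    rw [this]
    apply Filter.tendsto_atBot_add_const_right
    apply Filter.Tendsto.atTop_mul_atBot₀ Filter.tendsto_id
    have h5 : Filter.Tendsto (fun r : ℝ => q.2.1 / 2 * r) Filter.atTop Filter.atTop :=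
      Filter.Tendsto.const_mul_atTop (by positivity) Filter.tendsto_id
    have h6 := Filter.tendsto_neg_atTop_atBot.comp h5
    have := Filter.tendsto_atBot_add_const_left Filter.atTop (‖q.1‖ + ‖p‖) h6
    simpa [Function.comp_def, sub_eq_add_neg] using this
  exact key.comp (tendsto_norm_cocompact_atTop)

theorem Smax_spec [FiniteDimensional ℝ E] {ψ η : E → ℝ} {C : ℝ} (hψ : GoodPsi ψ)
    (hη : GoodEta η C) {q : E × ℝ × ℝ} (hq : q ∈ Udom E C) (w : E) :
    Ufun ψ η q w ≤ Ufun ψ η q (Smax ψ η q) :=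
  Classical.epsilon_spec (exists_max hψ hη hq) w

theorem max_growth {ψ η : E → ℝ} {C : ℝ} (hψ : GoodPsi ψ)
    (hη : GoodEta η C) {q : E × ℝ × ℝ} {z : E}
    (hz : ∀ w, Ufun ψ η q w ≤ Ufun ψ η q z) (w : E) :
    Ufun ψ η q w + (q.2.1 - |q.2.2| * C) / 2 * ‖w - z‖ ^ 2 ≤ Ufun ψ η q z := by
  have hl : ∀ l : ℝ, l ∈ Ioo (0:ℝ) 1 →
      Ufun ψ η q w + (q.2.1 - |q.2.2| * C) / 2 * (1 - l) * ‖w - z‖ ^ 2 ≤ Ufun ψ η q z := by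
    intro l hl
    have h1 := hψ.conv.2 (mem_univ z) (mem_univ w) (by linarith [hl.2] : 0 ≤ 1 - l) hl.1.le
      (by ring)
    have h2 := (hη.conv q.2.2).2 (mem_univ z) (mem_univ w) (by linarith [hl.2] : 0 ≤ 1 - l) hl.1.le
      (by ring)
    have h3 := hz ((1 - l) • z + l • w)
    have h4 : ‖(1 - l) • z + l • w‖ ^ 2
        = (1 - l) * ‖z‖ ^ 2 + l * ‖w‖ ^ 2 - l * (1 - l) * ‖w - z‖ ^ 2 := by
      rw [norm_add_sq_real, norm_sub_sq_real, norm_smul, norm_smul, inner_smul_left,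
        inner_smul_right, real_inner_comm z w, mul_pow, mul_pow, Real.norm_eq_abs,
        Real.norm_eq_abs, sq_abs, sq_abs]
      simp
      ring
    unfold Ufun at *
    simp only [smul_eq_mul] at h1 h2
    rw [inner_add_right, inner_smul_right, inner_smul_right] at h3
    rw [h4] at h2 h3
    have hl0 := hl.1
    refine le_of_mul_le_mul_left ?_ hl0
    nlinarith
  have ht : Filter.Tendsto (fun l : ℝ => Ufun ψ η q w
      + (q.2.1 - |q.2.2| * C) / 2 * (1 - l) * ‖w - z‖ ^ 2) (nhdsWithin 0 (Ioi 0))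
      (nhds (Ufun ψ η q w + (q.2.1 - |q.2.2| * C) / 2 * (1 - 0) * ‖w - z‖ ^ 2)) := by
    apply Filter.Tendsto.mono_left _ nhdsWithin_le_nhds
    apply Continuous.tendsto
    fun_prop
  have := le_of_tendsto ht (by
    filter_upwards [Ioo_mem_nhdsGT (zero_lt_one)] with l hl'
    exact hl l hl')
  simpa using this

theorem Smax_unique [FiniteDimensional ℝ E] {ψ η : E → ℝ} {C : ℝ} (hψ : GoodPsi ψ)
    (hη : GoodEta η C) {q : E × ℝ × ℝ} (hq : q ∈ Udom E C) {z : E}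
    (hz : ∀ w, Ufun ψ η q w ≤ Ufun ψ η q z) : Smax ψ η q = z := by
  have h1 := max_growth hψ hη hz (Smax ψ η q)
  have h2 := Smax_spec hψ hη hq z
  have hm : 0 < q.2.1 - |q.2.2| * C := by
    have : |q.2.2| * C < q.2.1 := hq
    linarith
  have h3 : ‖Smax ψ η q - z‖ ^ 2 ≤ 0 := by
    by_contra hcon
    push Not at hcon
    have := mul_pos (half_pos hm) hcon
    linarith
  have h4 : ‖Smax ψ η q - z‖ = 0 := by
    have := le_antisymm h3 (sq_nonneg _)
    exact pow_eq_zero_iff (two_ne_zero) |>.1 this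
  exact sub_eq_zero.1 (norm_eq_zero.1 h4)

theorem Smax_dist [FiniteDimensional ℝ E] {ψ η : E → ℝ} {C : ℝ} (hψ : GoodPsi ψ)
    (hη : GoodEta η C) {q q' : E × ℝ × ℝ} (hq : q ∈ Udom E C) (hq' : q' ∈ Udom E C) :
    ((q.2.1 - |q.2.2| * C) / 2 + (q'.2.1 - |q'.2.2| * C) / 2 - |q'.2.1 - q.2.1| / 2)
      * ‖Smax ψ η q' - Smax ψ η q‖
    ≤ ‖q'.1 - q.1‖ + |q'.2.1 - q.2.1| * ‖Smax ψ η q‖ + |q'.2.2 - q.2.2| * C := by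
  set S := Smax ψ η q with hS
  set S' := Smax ψ η q' with hS'
  have h1 := max_growth hψ hη (Smax_spec hψ hη hq) S'
  have h2 := max_growth hψ hη (Smax_spec hψ hη hq') S
  rw [← hS] at h1
  rw [← hS', norm_sub_rev] at h2
  set D := ‖S' - S‖ with hD
  rcases (norm_nonneg (S' - S)).eq_or_lt with h0 | h0
  · rw [← hD] at h0
    rw [← h0, mul_zero]
    have := hη.nonneg
    positivity
  have h3 : ⟪q'.1 - q.1, S' - S⟫ ≤ ‖q'.1 - q.1‖ * D := real_inner_le_norm _ _
  have h4 : ‖S'‖ ^ 2 - ‖S‖ ^ 2 = D ^ 2 + 2 * ⟪S' - S, S⟫ := by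
    rw [hD, norm_sub_sq_real, inner_sub_left, real_inner_self_eq_norm_sq]; ring
  have h5 : -((q'.2.1 - q.2.1) * (‖S'‖ ^ 2 - ‖S‖ ^ 2) / 2)
      ≤ |q'.2.1 - q.2.1| * (D ^ 2 / 2 + D * ‖S‖) := by
    have h51 : |‖S'‖ ^ 2 - ‖S‖ ^ 2| ≤ D ^ 2 + 2 * (D * ‖S‖) := by
      rw [h4]
      refine (abs_add_le _ _).trans ?_
      rw [abs_of_nonneg (sq_nonneg D), abs_mul, abs_two]
      gcongr
      exact abs_real_inner_le_norm _ _
    calc -((q'.2.1 - q.2.1) * (‖S'‖ ^ 2 - ‖S‖ ^ 2) / 2)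
        ≤ |(q'.2.1 - q.2.1) * (‖S'‖ ^ 2 - ‖S‖ ^ 2)| / 2 := by
          have := neg_le_abs ((q'.2.1 - q.2.1) * (‖S'‖ ^ 2 - ‖S‖ ^ 2)); linarith
      _ = |q'.2.1 - q.2.1| * (|‖S'‖ ^ 2 - ‖S‖ ^ 2| / 2) := by rw [abs_mul]; ring
      _ ≤ _ := by gcongr; linarith
  have h6 : -((q'.2.2 - q.2.2) * (η S' - η S)) ≤ |q'.2.2 - q.2.2| * (C * D) := by
    calc _ ≤ |(q'.2.2 - q.2.2) * (η S' - η S)| := neg_le_abs _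
      _ = |q'.2.2 - q.2.2| * |η S' - η S| := abs_mul _ _
      _ ≤ _ := by gcongr; exact hη.lip _ _
  unfold Ufun at h1 h2
  rw [inner_sub_left, inner_sub_right, inner_sub_right] at h3
  refine le_of_mul_le_mul_left ?_ h0
  rw [← hD]
  nlinarith

theorem Smax_continuousAt [FiniteDimensional ℝ E] {ψ η : E → ℝ} {C : ℝ} (hψ : GoodPsi ψ)
    (hη : GoodEta η C) {q : E × ℝ × ℝ} (hq : q ∈ Udom E C) :
    ContinuousAt (Smax ψ η) q := by
  have hm : 0 < q.2.1 - |q.2.2| * C := by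
    have : |q.2.2| * C < q.2.1 := hq
    linarith
  rw [ContinuousAt, tendsto_iff_norm_sub_tendsto_zero]
  have hden : ContinuousAt (fun q' : E × ℝ × ℝ => (q.2.1 - |q.2.2| * C) / 2
      + (q'.2.1 - |q'.2.2| * C) / 2 - |q'.2.1 - q.2.1| / 2) q := by fun_prop
  have hden0 : 0 < (q.2.1 - |q.2.2| * C) / 2
      + (q.2.1 - |q.2.2| * C) / 2 - |q.2.1 - q.2.1| / 2 := by simp; linarith
  have hfr : ContinuousAt (fun q' : E × ℝ × ℝ => (‖q'.1 - q.1‖ + |q'.2.1 - q.2.1| * ‖Smax ψ η q‖ +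
      |q'.2.2 - q.2.2| * C) / ((q.2.1 - |q.2.2| * C) / 2
      + (q'.2.1 - |q'.2.2| * C) / 2 - |q'.2.1 - q.2.1| / 2)) q := by
    apply ContinuousAt.div _ hden hden0.ne'
    fun_prop
  have hlim := hfr.tendsto
  simp only [sub_self, norm_zero, abs_zero, zero_mul, add_zero, zero_div] at hlim
  refine squeeze_zero' (Filter.Eventually.of_forall fun _ => norm_nonneg _) ?_ hlim
  filter_upwards [(isOpen_Udom C).mem_nhds hq, hden.eventually (lt_mem_nhds hden0)] with q' hq' hpos
  rw [le_div_iff₀ hpos, mul_comm]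
  exact Smax_dist hψ hη hq hq'

/-- The linear functional `q ↦ ⟪q.1,z⟫ - q.2.1 |z|²/2 - q.2.2 η(z)`. -/
noncomputable def ell (η : E → ℝ) (z : E) : E × ℝ × ℝ →L[ℝ] ℝ :=
  (innerSL ℝ z).comp (ContinuousLinearMap.fst ℝ E (ℝ × ℝ))
  - (‖z‖ ^ 2 / 2) • ((ContinuousLinearMap.fst ℝ ℝ ℝ).comp (ContinuousLinearMap.snd ℝ E (ℝ × ℝ)))
  - (η z) • ((ContinuousLinearMap.snd ℝ ℝ ℝ).comp (ContinuousLinearMap.snd ℝ E (ℝ × ℝ)))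

theorem ell_apply (η : E → ℝ) (z : E) (q : E × ℝ × ℝ) :
    ell η z q = ⟪q.1, z⟫ - q.2.1 * ‖z‖ ^ 2 / 2 - q.2.2 * η z := by
  simp [ell, real_inner_comm]
  ring

theorem Ufun_eq (ψ η : E → ℝ) (z : E) (q : E × ℝ × ℝ) :
    Ufun ψ η q z = ell η z q - ψ z := by
  rw [ell_apply, Ufun]

theorem ell_continuous {η : E → ℝ} (hη : Continuous η) : Continuous (ell η) := by
  unfold ell
  refine (Continuous.sub (Continuous.sub ?_ ?_) ?_)
  · exact (((innerSL ℝ).continuous).clm_comp continuous_const)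
  · fun_prop
  · fun_prop

theorem Gfun_subgrad [FiniteDimensional ℝ E] {ψ η : E → ℝ} {C : ℝ} (hψ : GoodPsi ψ)
    (hη : GoodEta η C) {q q' : E × ℝ × ℝ} (hq' : q' ∈ Udom E C) :
    Gfun ψ η q + ell η (Smax ψ η q) (q' - q) ≤ Gfun ψ η q' := by
  have := Smax_spec hψ hη hq' (Smax ψ η q)
  rw [Gfun, Gfun, map_sub]
  rw [Ufun_eq] at this ⊢
  linarith

theorem hasFDerivAt_of_subgrad {X : Type*} [NormedAddCommGroup X] [NormedSpace ℝ X]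
    {G : X → ℝ} {s : X → (X →L[ℝ] ℝ)} {U : Set X} (hU : IsOpen U) {q : X} (hq : q ∈ U)
    (hcont : ContinuousAt s q)
    (hsub : ∀ q ∈ U, ∀ q' ∈ U, G q + s q (q' - q) ≤ G q') : HasFDerivAt G (s q) q := by
  rw [hasFDerivAt_iff_isLittleO, Asymptotics.isLittleO_iff]
  intro c hc
  have := Metric.continuousAt_iff'.1 hcont c hc
  filter_upwards [this, hU.mem_nhds hq] with q' h1 hq'
  have h2 := hsub q hq q' hq'
  have h3 := hsub q' hq' q hq
  rw [Real.norm_eq_abs, abs_of_nonneg (by linarith)]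
  have h4 : (s q' - s q) (q' - q) ≤ c * ‖q' - q‖ := by
    refine (le_abs_self _).trans ?_
    rw [← Real.norm_eq_abs]
    refine (ContinuousLinearMap.le_opNorm _ _).trans ?_
    rw [dist_eq_norm] at h1
    gcongr
  have h5 : s q' (q - q') = - s q' (q' - q) := by
    rw [← map_neg, neg_sub]
  rw [ContinuousLinearMap.sub_apply] at h4
  linarith

theorem Gfun_hasFDerivAt [FiniteDimensional ℝ E] {ψ η : E → ℝ} {C : ℝ} (hψ : GoodPsi ψ)
    (hη : GoodEta η C) {q : E × ℝ × ℝ} (hq : q ∈ Udom E C) :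
    HasFDerivAt (Gfun ψ η) (ell η (Smax ψ η q)) q := by
  have hcont : ContinuousAt (fun q' => ell η (Smax ψ η q')) q :=
    (ell_continuous hη.continuous).continuousAt.comp (Smax_continuousAt hψ hη hq)
  exact hasFDerivAt_of_subgrad (s := fun q' => ell η (Smax ψ η q')) (isOpen_Udom C) hq hcont
    (fun q _ q' hq' => Gfun_subgrad hψ hη hq')

theorem Gfun_contDiffAt [FiniteDimensional ℝ E] {ψ η : E → ℝ} {C : ℝ} (hψ : GoodPsi ψ)
    (hη : GoodEta η C) {q : E × ℝ × ℝ} (hq : q ∈ Udom E C) :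
    ContDiffAt ℝ 1 (Gfun ψ η) q := by
  rw [contDiffAt_one_iff]
  refine ⟨fun q' => ell η (Smax ψ η q'), Udom E C, (isOpen_Udom C).mem_nhds hq, ?_, ?_⟩
  · intro q' hq'
    exact ((ell_continuous hη.continuous).continuousAt.comp
      (Smax_continuousAt hψ hη hq')).continuousWithinAt
  · intro q' hq'
    exact Gfun_hasFDerivAt hψ hη hq'

theorem subgrad_of_hasGradientAt [CompleteSpace E] {ψ : E → ℝ} (hψ : ConvexOn ℝ univ ψ) {x g : E}
    (h : HasGradientAt ψ g x) (z : E) : ψ x + ⟪g, z - x⟫ ≤ ψ z := by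
  have h1 : HasDerivAt (fun s : ℝ => ψ (x + s • (z - x))) ⟪g, z - x⟫ 0 := by
    have h2 : HasDerivAt (fun s : ℝ => x + s • (z - x)) (z - x) 0 := by
      simpa using ((hasDerivAt_id (0:ℝ)).smul_const (z - x)).const_add x
    have h3 : HasFDerivAt ψ (InnerProductSpace.toDual ℝ E g) (x + (0:ℝ) • (z - x)) := by
      simpa using h.hasFDerivAt
    have h4 := h3.comp_hasDerivAt 0 h2
    rw [InnerProductSpace.toDual_apply_apply] at h4
    exact h4
  have hc : ConvexOn ℝ univ (fun s : ℝ => ψ (x + s • (z - x))) := by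
    have := hψ.comp_affineMap (AffineMap.lineMap x z : ℝ →ᵃ[ℝ] E)
    have e : (fun s : ℝ => ψ (x + s • (z - x))) = ψ ∘ (AffineMap.lineMap x z : ℝ →ᵃ[ℝ] E) := by
      funext s
      simp [AffineMap.lineMap_apply, add_comm]
    rw [e]
    exact this
  have := hc.le_slope_of_hasDerivAt (mem_univ 0) (mem_univ 1) zero_lt_one h1
  simp [slope_def_field] at this
  linarith

theorem GoodPsi.of_grad [FiniteDimensional ℝ E] {ψ : E → ℝ} (hψ : ConvexOn ℝ univ ψ) {x g : E}
    (h : HasGradientAt ψ g x) : GoodPsi ψ where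
  conv := hψ
  cont := continuousOn_univ.1 (hψ.continuousOn isOpen_univ)
  minor := ⟨ψ x - ⟪g, x⟫, g, fun z => by
    have := subgrad_of_hasGradientAt hψ h z
    rw [inner_sub_right] at this
    linarith⟩

theorem GoodEta.zero : GoodEta (fun _ : E => (0:ℝ)) 0 where
  bdd := by simp
  nonneg := le_rfl
  lip := by simp
  conv := by intro k; simpa using convexOn_const (0:ℝ) convex_univ

theorem convexOn_cos_add : ConvexOn ℝ univ (fun u : ℝ => Real.cos u + u ^ 2 / 2) := by
  have hd : deriv (fun u : ℝ => Real.cos u + u ^ 2 / 2) = fun u => -Real.sin u + u := by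
    ext u
    have : HasDerivAt (fun u : ℝ => Real.cos u + u ^ 2 / 2) (-Real.sin u + (2 * u) / 2) u := by
      apply (Real.hasDerivAt_cos u).add
      simpa using (hasDerivAt_pow 2 u).div_const 2
    rw [this.deriv]; ring
  refine Monotone.convexOn_univ_of_deriv (by fun_prop) ?_
  rw [hd]
  apply monotone_of_deriv_nonneg (by fun_prop)
  intro u
  have : HasDerivAt (fun u : ℝ => -Real.sin u + u) (-Real.cos u + 1) u :=
    (Real.hasDerivAt_sin u).neg.add (hasDerivAt_id u)
  rw [this.deriv]
  linarith [Real.cos_le_one u]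

theorem convexOn_quad (ξ : E) : ConvexOn ℝ univ (fun z : E => ‖ξ‖ ^ 2 * ‖z‖ ^ 2 - ⟪ξ, z⟫ ^ 2) := by
  refine ⟨convex_univ, ?_⟩
  intro x _ y _ a b ha hb hab
  have h1 : ⟪ξ, x - y⟫ ^ 2 ≤ ‖ξ‖ ^ 2 * ‖x - y‖ ^ 2 := by
    have := abs_real_inner_le_norm ξ (x - y)
    rw [← mul_pow, ← sq_abs]
    gcongr
  have h4 : ‖a • x + b • y‖ ^ 2
        = a * ‖x‖ ^ 2 + b * ‖y‖ ^ 2 - a * b * ‖x - y‖ ^ 2 := by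
    rw [norm_add_sq_real, norm_sub_sq_real, norm_smul, norm_smul, inner_smul_left,
        inner_smul_right, mul_pow, mul_pow, Real.norm_eq_abs,
        Real.norm_eq_abs, sq_abs, sq_abs]
    obtain rfl : b = 1 - a := by linarith
    simp
    ring
  simp only [smul_eq_mul]
  rw [h4, inner_add_right, inner_smul_right, inner_smul_right]
  rw [inner_sub_right] at h1
  obtain rfl : b = 1 - a := by linarith
  nlinarith [mul_nonneg ha hb]

theorem GoodEta.cos (ξ : E) (b : ℝ) :
    GoodEta (fun z : E => Real.cos (⟪ξ, z⟫ + b)) (‖ξ‖ ^ 2 + ‖ξ‖) where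
  bdd := fun z => Real.abs_cos_le_one _
  nonneg := by positivity
  lip := by
    intro z w
    have h1 : |Real.cos (⟪ξ, z⟫ + b) - Real.cos (⟪ξ, w⟫ + b)| ≤ |⟪ξ, z⟫ - ⟪ξ, w⟫| := by
      have := Real.abs_cos_sub_cos_le (⟪ξ, z⟫ + b) (⟪ξ, w⟫ + b)
      simpa using this
    refine h1.trans ?_
    rw [← inner_sub_right]
    refine (abs_real_inner_le_norm _ _).trans ?_
    nlinarith [sq_nonneg ‖ξ‖, norm_nonneg (z - w), mul_nonneg (sq_nonneg ‖ξ‖) (norm_nonneg (z - w))]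
  conv := by
    -- nonneg multiples first
    have key : ∀ (k b : ℝ), 0 ≤ k → ConvexOn ℝ univ (fun z : E => k * Real.cos (⟪ξ, z⟫ + b)
        + k * (‖ξ‖ ^ 2 + ‖ξ‖) / 2 * ‖z‖ ^ 2) := by
      intro k b hk
      have hA : ConvexOn ℝ univ (fun z : E => Real.cos (⟪ξ, z⟫ + b) + (⟪ξ, z⟫ + b) ^ 2 / 2) := by
        have := (convexOn_cos_add.translate_left b).comp_linearMap (innerSL ℝ ξ).toLinearMap
        exact this
      have hB := convexOn_quad ξ
      have hC : ConvexOn ℝ univ (fun z : E => ‖z‖ ^ 2) := by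
        exact (convexOn_norm convex_univ).pow (fun z _ => norm_nonneg z) 2
      have hD : ConvexOn ℝ univ (fun z : E => (-b) * ⟪ξ, z⟫ + (- b ^ 2 / 2)) := by
        have := ((-b) • (innerSL ℝ ξ).toLinearMap).convexOn (convex_univ)
        exact (this.add_const _)
      have := ((hA.add (hB.smul (by norm_num : (0:ℝ) ≤ 1 / 2))).add
        ((hC.smul (by positivity : 0 ≤ ‖ξ‖ / 2)).add hD)).smul hk
      have e : (fun z : E => k * Real.cos (⟪ξ, z⟫ + b) + k * (‖ξ‖ ^ 2 + ‖ξ‖) / 2 * ‖z‖ ^ 2)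
          = fun z => k * ((Real.cos (⟪ξ, z⟫ + b) + (⟪ξ, z⟫ + b) ^ 2 / 2
            + (1 / 2) * (‖ξ‖ ^ 2 * ‖z‖ ^ 2 - ⟪ξ, z⟫ ^ 2)) +
            ((‖ξ‖ / 2) * ‖z‖ ^ 2 + ((-b) * ⟪ξ, z⟫ + (- b ^ 2 / 2)))) := by
        funext z
        ring
      rw [e]
      exact this
    intro k
    rcases le_total 0 k with hk | hk
    · simpa [abs_of_nonneg hk] using key k b hk
    · have := key (-k) (b + Real.pi) (by linarith)
      rw [abs_of_nonpos hk]
      convert this using 3 with z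
      rw [← add_assoc, Real.cos_add_pi]; ring

end conj

section testfun
variable {E : Type*} [NormedAddCommGroup E] [InnerProductSpace ℝ E] [FiniteDimensional ℝ E]

/-- Hopf–Lax value with inverse time `a` and perturbation size `k`. -/
noncomputable def phi (ψ η : E → ℝ) (a k : ℝ) (y : E) : ℝ :=
  a / 2 * ‖y‖ ^ 2 - Gfun ψ η (a • y, a - 1, k)

theorem phi_le {ψ η : E → ℝ} {C : ℝ} (hψ : GoodPsi ψ) (hη : GoodEta η C) {a k : ℝ}
    (h : |k| * C < a - 1) (x y : E) :
    phi ψ η a k y ≤ a / 2 * ‖y - x‖ ^ 2 - ‖x‖ ^ 2 / 2 + ψ x + k * η x := by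
  have hq : ((a • y, a - 1, k) : E × ℝ × ℝ) ∈ Udom E C := h
  have := Smax_spec hψ hη hq x
  unfold phi Gfun
  rw [norm_sub_sq_real]
  simp only [Ufun, inner_smul_left] at this ⊢
  simp at this ⊢
  linarith

theorem phi_ge {ψ η : E → ℝ} {a : ℝ}
    (h : 1 < a) (x p : E) (hp : ∀ z, ψ x + ⟪p, z - x⟫ ≤ ψ z) :
    ψ x - ‖x‖ ^ 2 / 2 + ‖p - x‖ ^ 2 / 2 ≤ phi ψ η a 0 p := by
  unfold phi Gfun Ufun
  generalize Smax ψ η (a • p, a - 1, 0) = z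
  have h1 := hp z
  have h2 : 0 ≤ (a - 1) * ‖p - z‖ ^ 2 := by
    have := sub_pos.2 h
    positivity
  rw [norm_sub_sq_real] at h2 ⊢
  rw [inner_sub_right] at h1
  simp only [inner_smul_left]
  simp
  nlinarith

theorem Smax_grad {ψ η : E → ℝ} {C : ℝ} (hψ : GoodPsi ψ) (hη : GoodEta η C) {a : ℝ} (ha : 0 < a)
    (x p : E) (hp : ∀ z, ψ x + ⟪p, z - x⟫ ≤ ψ z) : Smax ψ η (a • x + p, a, 0) = x := by
  apply Smax_unique hψ hη (show |(0:ℝ)| * C < a by simpa using ha)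
  intro w
  have h1 := hp w
  have h2 : 0 ≤ a * ‖w - x‖ ^ 2 := by positivity
  rw [norm_sub_sq_real] at h2
  unfold Ufun
  rw [inner_sub_right] at h1
  simp only [inner_add_left, inner_smul_left, real_inner_self_eq_norm_sq, real_inner_comm x w] at *
  simp
  nlinarith

theorem Smax_zero_eq {ψ : E → ℝ} (η η' : E → ℝ) (p : E) (a : ℝ) :
    Smax ψ η (p, a, 0) = Smax ψ η' (p, a, 0) := by
  simp [Smax, Ufun]

theorem Smax_subgrad {ψ η : E → ℝ} {C : ℝ} (hψ : GoodPsi ψ) (hη : GoodEta η C) {a : ℝ}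
    (ha : 0 < a) (p z : E) :
    ψ (Smax ψ η (p, a, 0)) + ⟪p - a • Smax ψ η (p, a, 0), z - Smax ψ η (p, a, 0)⟫ ≤ ψ z := by
  have := max_growth hψ hη
    (Smax_spec hψ hη (show ((p, a, 0) : E × ℝ × ℝ) ∈ Udom E C from
      (by simpa [Udom] using ha))) z
  generalize Smax ψ η (p, a, 0) = S at *
  simp only [Ufun] at this
  rw [norm_sub_sq_real] at this
  rw [inner_sub_left, inner_smul_left, inner_sub_right, inner_sub_right,
    real_inner_self_eq_norm_sq]
  rw [real_inner_comm] at this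
  simp at this ⊢
  rw [real_inner_comm S z] at *
  nlinarith [real_inner_comm p z, real_inner_comm p S]

theorem subgrad_unique {ψ : E → ℝ} {x g p : E}
    (h : HasGradientAt ψ g x) (hp : ∀ z, ψ x + ⟪p, z - x⟫ ≤ ψ z) : p = g := by
  have hmin : IsLocalMin (fun z => ψ z - ⟪p, z⟫) x := by
    apply Filter.Eventually.of_forall
    intro z
    have := hp z
    rw [inner_sub_right] at this
    simp only
    linarith
  have hd : HasFDerivAt (fun z => ψ z - ⟪p, z⟫)
      (InnerProductSpace.toDual ℝ E g - innerSL ℝ p) x := by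
    exact h.hasFDerivAt.sub (innerSL ℝ p).hasFDerivAt
  have h0 := hmin.hasFDerivAt_eq_zero hd
  have : ∀ v, ⟪g - p, v⟫ = 0 := by
    intro v
    have := congrArg (fun f => f v) h0
    simpa [inner_sub_left] using this
  have h2 := this (g - p)
  rw [inner_self_eq_zero] at h2
  exact (sub_eq_zero.1 h2).symm

theorem phi_hasGradientAt {ψ η : E → ℝ} {C : ℝ} (hψ : GoodPsi ψ) (hη : GoodEta η C) {a k : ℝ}
    (h : |k| * C < a - 1) (y : E) :
    HasGradientAt (phi ψ η a k) (a • (y - Smax ψ η (a • y, a - 1, k))) y := by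
  have hq : ((a • y, a - 1, k) : E × ℝ × ℝ) ∈ Udom E C := h
  have hG := Gfun_hasFDerivAt hψ hη hq
  have hin : HasFDerivAt (fun y : E => ((a • y, a - 1, k) : E × ℝ × ℝ))
      ((a • ContinuousLinearMap.id ℝ E).prod 0) y :=
    (((hasFDerivAt_id y).const_smul a).prodMk (hasFDerivAt_const _ _))
  have h1 := hG.comp y hin
  have h2 : HasFDerivAt (fun y : E => a / 2 * ‖y‖ ^ 2) ((a / 2) • (2 • (innerSL ℝ y))) y :=
    ((hasStrictFDerivAt_norm_sq y).hasFDerivAt.const_mul (a / 2))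
  have h3 := h2.sub h1
  rw [hasGradientAt_iff_hasFDerivAt]
  refine h3.congr_fderiv ?_
  ext v
  simp [ell_apply, inner_sub_left, inner_smul_left, real_inner_comm]
  ring

theorem phi_hasDerivAt {ψ η : E → ℝ} {C : ℝ} (hψ : GoodPsi ψ) (hη : GoodEta η C) {α k : ℝ → ℝ}
    {α' k' t : ℝ} (h : |k t| * C < α t - 1) (hα : HasDerivAt α α' t) (hk : HasDerivAt k k' t)
    (y : E) :
    HasDerivAt (fun s => phi ψ η (α s) (k s) y)
      (α' / 2 * ‖y - Smax ψ η (α t • y, α t - 1, k t)‖ ^ 2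
        + k' * η (Smax ψ η (α t • y, α t - 1, k t))) t := by
  have hq : ((α t • y, α t - 1, k t) : E × ℝ × ℝ) ∈ Udom E C := h
  have hG := Gfun_hasFDerivAt hψ hη hq
  have hin : HasDerivAt (fun s : ℝ => ((α s • y, α s - 1, k s) : E × ℝ × ℝ))
      ((α' • y, α', k')) t :=
    ((hα.smul_const y).prodMk ((hα.sub_const 1).prodMk hk))
  have h1 := hG.comp_hasDerivAt t hin
  have h2 : HasDerivAt (fun s => α s / 2 * ‖y‖ ^ 2) (α' / 2 * ‖y‖ ^ 2) t :=
    (hα.div_const 2).mul_const _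
  have h3 := h2.sub h1
  refine h3.congr_deriv ?_
  rw [ell_apply, norm_sub_sq_real]
  simp only [inner_smul_left]
  simp
  ring

theorem phi_contDiff {ψ η : E → ℝ} {C : ℝ} (hψ : GoodPsi ψ) (hη : GoodEta η C) {α k : ℝ → ℝ}
    (h : ∀ t, |k t| * C < α t - 1) (hα : ContDiff ℝ 1 α) (hk : ContDiff ℝ 1 k) :
    ContDiff ℝ 1 (fun z : E × ℝ => phi ψ η (α z.2) (k z.2) z.1) := by
  rw [contDiff_iff_contDiffAt]
  intro z
  have hα' : ContDiff ℝ 1 (fun z : E × ℝ => α z.2) := hα.comp contDiff_snd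
  have hk' : ContDiff ℝ 1 (fun z : E × ℝ => k z.2) := hk.comp contDiff_snd
  unfold phi
  have hq : ((α z.2 • z.1, α z.2 - 1, k z.2) : E × ℝ × ℝ) ∈ Udom E C := h z.2
  have hG := Gfun_contDiffAt hψ hη hq
  have hin : ContDiff ℝ 1 (fun z : E × ℝ => ((α z.2 • z.1, α z.2 - 1, k z.2) : E × ℝ × ℝ)) :=
    (hα'.smul contDiff_fst).prodMk ((hα'.sub contDiff_const).prodMk hk')
  have h1 := hG.comp z hin.contDiffAt
  have h2 : ContDiff ℝ 1 (fun z : E × ℝ => α z.2 / 2 * ‖z.1‖ ^ 2) :=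
    (hα'.div_const 2).mul (contDiff_fst.norm_sq ℝ)
  exact h2.contDiffAt.sub h1

end testfun

section density
variable {E : Type*} [NormedAddCommGroup E] [InnerProductSpace ℝ E] [FiniteDimensional ℝ E]

theorem det_of_eigenbasis {ι : Type*} [Fintype ι] [DecidableEq ι] (b : Module.Basis ι ℝ E)
    (f : E →ₗ[ℝ] E) (μ : ι → ℝ) (h : ∀ i, f (b i) = μ i • b i) : LinearMap.det f = ∏ i, μ i := by
  rw [← LinearMap.det_toMatrix b]
  have : LinearMap.toMatrix b b f = Matrix.diagonal μ := by
    ext i j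
    rw [LinearMap.toMatrix_apply, h, map_smul, Finsupp.smul_apply, Module.Basis.repr_self,
      Matrix.diagonal_apply, Finsupp.single_apply]
    by_cases hij : i = j
    · subst hij; simp
    · simp [hij, Ne.symm hij]
  rw [this, Matrix.det_diagonal]

theorem det_min_le (A : E →L[ℝ] E) (hA : ∀ v w, ⟪A v, w⟫ = ⟪v, A w⟫) {t : ℝ} (ht : t ∈ Ioo (0:ℝ) 1)
    (hmon : ∀ h, (1 - t) * ‖A h‖ ^ 2 ≤ ⟪A h, h⟫) (hdet : 1 < |A.det|) :
    |(t⁻¹ • (ContinuousLinearMap.id ℝ E - (1 - t) • A)).det| ≤ 1 := by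
  have hsymm : (A : E →ₗ[ℝ] E).IsSymmetric := fun v w => hA v w
  set b := hsymm.eigenvectorBasis rfl with hb
  set lam := hsymm.eigenvalues rfl with hlam
  have hAb : ∀ i, A (b i) = lam i • b i := fun i => hsymm.apply_eigenvectorBasis rfl i
  have hnorm : ∀ i, ‖b i‖ = 1 := fun i => b.orthonormal.1 i
  have ht0 := ht.1
  have ht1 := ht.2
  have hl : ∀ i, (1 - t) * lam i ^ 2 ≤ lam i := by
    intro i
    have := hmon (b i)
    rw [hAb, norm_smul, hnorm, inner_smul_left, real_inner_self_eq_norm_sq, hnorm] at this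
    simpa using this
  have hl0 : ∀ i, 0 ≤ lam i := fun i => le_trans (by have := sub_pos.2 ht1; positivity) (hl i)
  have hl1 : ∀ i, (1 - t) * lam i ≤ 1 := by
    intro i
    rcases (hl0 i).eq_or_lt with h | h
    · rw [← h]; simp
    · refine le_of_mul_le_mul_right ?_ h
      have := hl i
      nlinarith
  have hd1 : A.det = ∏ i, lam i := by
    refine det_of_eigenbasis b.toBasis (A : E →ₗ[ℝ] E) lam ?_
    intro i
    simpa using hAb i
  set β := fun i => t⁻¹ * (1 - (1 - t) * lam i) with hβ
  have hd2 : (t⁻¹ • (ContinuousLinearMap.id ℝ E - (1 - t) • A)).det = ∏ i, β i := by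
    refine det_of_eigenbasis b.toBasis (t⁻¹ • (ContinuousLinearMap.id ℝ E - (1 - t) • A) : E →L[ℝ] E) β ?_
    intro i
    have : (t⁻¹ • (ContinuousLinearMap.id ℝ E - (1 - t) • A)) (b i) = β i • b i := by
      change t⁻¹ • (b i - (1 - t) • A (b i)) = _
      rw [hAb, hβ]
      module
    simpa using this
  have hβ0 : ∀ i, 0 ≤ β i := fun i => mul_nonneg (by positivity) (by linarith [hl1 i])
  rw [hd1, abs_of_nonneg (Finset.prod_nonneg fun i _ => hl0 i)] at hdet
  rw [hd2, abs_of_nonneg (Finset.prod_nonneg fun i _ => hβ0 i)]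
  by_contra hcon
  push Not at hcon
  have h1 : 1 < (∏ i, lam i) ^ (1 - t) * (∏ i, β i) ^ t :=
    one_lt_mul_of_lt_of_le (Real.one_lt_rpow hdet (by linarith)) (Real.one_lt_rpow hcon ht0).le
  rw [← Real.finsetProd_rpow _ _ (fun i _ => hl0 i), ← Real.finsetProd_rpow _ _ (fun i _ => hβ0 i),
    ← Finset.prod_mul_distrib] at h1
  have h2 : ∏ i, lam i ^ (1 - t) * β i ^ t ≤ 1 := by
    apply Finset.prod_le_one
    · intro i _
      exact mul_nonneg (Real.rpow_nonneg (hl0 i) _) (Real.rpow_nonneg (hβ0 i) _)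
    · intro i _
      refine (Real.geom_mean_le_arith_mean2_weighted (by linarith) ht0.le (hl0 i) (hβ0 i)
        (by ring)).trans ?_
      rw [hβ]
      field_simp
      linarith
  linarith

theorem lipschitz_image_null [MeasurableSpace E] [BorelSpace E] {s : E → E} {K : NNReal}
    (hs : LipschitzWith K s) {B : Set E} (μ : Measure E) [μ.IsAddHaarMeasure] (hB : μ B = 0) :
    μ (s '' B) = 0 := by
  have e1 := Measure.isAddLeftInvariant_eq_smul (Measure.hausdorffMeasure (Module.finrank ℝ E : ℝ) : Measure E) μ
  have e2 := Measure.isAddLeftInvariant_eq_smul μ (Measure.hausdorffMeasure (Module.finrank ℝ E : ℝ) : Measure E)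
  have h1 : (Measure.hausdorffMeasure (Module.finrank ℝ E : ℝ) : Measure E) B = 0 := by
    rw [e1, Measure.smul_apply, hB, smul_zero]
  have h2 := hs.hausdorffMeasure_image_le (d := (Module.finrank ℝ E : ℝ)) (by positivity) B
  rw [h1, mul_zero] at h2
  rw [e2, Measure.smul_apply, le_antisymm h2 bot_le, smul_zero]

theorem density_bound [MeasurableSpace E] [BorelSpace E] (μ : Measure E) [μ.IsAddHaarMeasure]
    (ν : Measure E) {H : E → ℝ} {s : E → E} {t : ℝ} (ht : t ∈ Ioo (0:ℝ) 1)
    (hH : ∀ y, HasGradientAt H (s y) y)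
    (hmon : ∀ y y', (1 - t) * ‖s y - s y'‖ ^ 2 ≤ ⟪s y - s y', y - y'⟫)
    (h1 : ∀ B, MeasurableSet B → ν B ≤ μ (s '' B))
    (h2 : ∀ B, MeasurableSet B → ν B ≤ μ ((fun y => t⁻¹ • (y - (1 - t) • s y)) '' B)) :
    ν ≤ μ := by
  have ht0 := ht.1
  have ht1 := sub_pos.2 ht.2
  have hlip : LipschitzWith (Real.toNNReal (1 - t)⁻¹) s := by
    apply LipschitzWith.of_dist_le_mul
    intro y y'
    rw [Real.coe_toNNReal _ (by positivity), dist_eq_norm, dist_eq_norm]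
    rw [inv_mul_eq_div, le_div_iff₀ ht1]
    rcases (norm_nonneg (s y - s y')).eq_or_lt with h | h
    · rw [← h]; simp
    · refine le_of_mul_le_mul_left ?_ h
      have := hmon y y'
      have := real_inner_le_norm (s y - s y') (y - y')
      nlinarith
  have hae : ∀ᵐ y ∂μ, DifferentiableAt ℝ s y := hlip.ae_differentiableAt
  set D := {y | DifferentiableAt ℝ s y} with hD
  have hDm : MeasurableSet D := measurableSet_of_differentiableAt ℝ s
  -- properties of derivative
  have hsym : ∀ y ∈ D, ∀ v w, ⟪fderiv ℝ s y v, w⟫ = ⟪v, fderiv ℝ s y w⟫ := by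
    intro y hy v w
    have hy' : HasFDerivAt s (fderiv ℝ s y) y := DifferentiableAt.hasFDerivAt hy
    have hf' : HasFDerivAt (fun y => innerSL ℝ (s y)) ((innerSL ℝ).comp (fderiv ℝ s y)) y :=
      (innerSL ℝ).hasFDerivAt.comp y hy'
    have hf : ∀ y, HasFDerivAt H (innerSL ℝ (s y)) y := by
      intro y
      have := (hH y).hasFDerivAt
      exact this
    have := second_derivative_symmetric hf hf' v w
    have h3 : ⟪fderiv ℝ s y v, w⟫ = ⟪fderiv ℝ s y w, v⟫ := this
    rw [h3, real_inner_comm]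
  have hmonD : ∀ y ∈ D, ∀ h, (1 - t) * ‖fderiv ℝ s y h‖ ^ 2 ≤ ⟪fderiv ℝ s y h, h⟫ := by
    intro y hy h
    have hy' : HasFDerivAt s (fderiv ℝ s y) y := DifferentiableAt.hasFDerivAt hy
    have hl := hy'.hasLineDerivAt h
    have hl' := hl.tendsto_slope_zero
    have l1 : Filter.Tendsto (fun r : ℝ => (1 - t) * ‖r⁻¹ • (s (y + r • h) - s y)‖ ^ 2)
        (nhdsWithin 0 {0}ᶜ) (nhds ((1 - t) * ‖fderiv ℝ s y h‖ ^ 2)) := by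
      have := ((hl'.norm).pow 2).const_mul (1 - t)
      simpa using this
    have l2 : Filter.Tendsto (fun r : ℝ => ⟪r⁻¹ • (s (y + r • h) - s y), h⟫)
        (nhdsWithin 0 {0}ᶜ) (nhds (⟪fderiv ℝ s y h, h⟫)) := by
      have := Filter.Tendsto.inner (𝕜 := ℝ) hl' (tendsto_const_nhds (x := h))
      simpa using this
    refine le_of_tendsto_of_tendsto l1 l2 ?_
    filter_upwards [self_mem_nhdsWithin] with r hr
    have hr' : r ≠ 0 := hr
    have := hmon (y + r • h) y
    rw [add_sub_cancel_left, inner_smul_right] at this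
    rw [norm_smul, inner_smul_left, mul_pow, Real.norm_eq_abs, sq_abs]
    have hr2 : 0 < (r⁻¹) ^ 2 := by positivity
    have h5 := mul_le_mul_of_nonneg_left this hr2.le
    have h6 : r⁻¹ ^ 2 * (r * ⟪s (y + r • h) - s y, h⟫) = r⁻¹ * ⟪s (y + r • h) - s y, h⟫ := by
      field_simp
    rw [h6] at h5
    simp only [conj_trivial]
    linarith
  have hdetm : Measurable (fun y => |(fderiv ℝ s y).det|) :=
    (ContinuousLinearMap.continuous_det.measurable.comp (measurable_fderiv ℝ s)).abs
  set P := {y | |(fderiv ℝ s y).det| ≤ 1} with hP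
  have hPm : MeasurableSet P := measurableSet_le hdetm measurable_const
  have bound : ∀ B, MeasurableSet B → B ⊆ D → ∀ (f : E → E) (f' : E → E →L[ℝ] E),
      (∀ y ∈ B, HasFDerivAt f (f' y) y) → (∀ y ∈ B, |(f' y).det| ≤ 1) → μ (f '' B) ≤ μ B := by
    intro B hB hBD f f' hf hdet
    refine (addHaar_image_le_lintegral_abs_det_fderiv μ hB
      (fun y hy => (hf y hy).hasFDerivWithinAt)).trans ?_
    calc ∫⁻ y in B, ENNReal.ofReal |(f' y).det| ∂μ ≤ ∫⁻ y in B, 1 ∂μ := by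
          apply setLIntegral_mono' hB
          intro y hy
          rw [ENNReal.ofReal_le_one]
          exact hdet y hy
      _ = μ B := by simp
  refine Measure.le_iff.2 fun B hB => ?_
  have hsplit : ν B ≤ ν (B ∩ Dᶜ) + (ν (B ∩ D ∩ P) + ν (B ∩ D ∩ Pᶜ)) := by
    have : B ⊆ (B ∩ Dᶜ) ∪ ((B ∩ D ∩ P) ∪ (B ∩ D ∩ Pᶜ)) := by
      intro y hy
      by_cases h : y ∈ D <;> by_cases h' : y ∈ P <;> simp [hy, h, h']
    exact (measure_mono this).trans ((measure_union_le _ _).trans (by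
      gcongr; exact measure_union_le _ _))
  have z1 : ν (B ∩ Dᶜ) = 0 := by
    have h0 : μ (B ∩ Dᶜ) = 0 := measure_mono_null inter_subset_right hae
    exact le_antisymm ((h1 _ (hB.inter hDm.compl)).trans
      (lipschitz_image_null hlip μ h0).le) bot_le
  have z2 : ν (B ∩ D ∩ P) ≤ μ (B ∩ D ∩ P) := by
    refine (h1 _ ((hB.inter hDm).inter hPm)).trans ?_
    refine bound _ ((hB.inter hDm).inter hPm) (fun y hy => hy.1.2) s (fderiv ℝ s) ?_ ?_
    · intro y hy
      exact DifferentiableAt.hasFDerivAt hy.1.2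
    · intro y hy; exact hy.2
  have z3 : ν (B ∩ D ∩ Pᶜ) ≤ μ (B ∩ D ∩ Pᶜ) := by
    refine (h2 _ ((hB.inter hDm).inter hPm.compl)).trans ?_
    refine bound _ ((hB.inter hDm).inter hPm.compl) (fun y hy => hy.1.2) _
      (fun y => t⁻¹ • (ContinuousLinearMap.id ℝ E - (1 - t) • fderiv ℝ s y)) ?_ ?_
    · intro y hy
      have hy' : HasFDerivAt s (fderiv ℝ s y) y := DifferentiableAt.hasFDerivAt hy.1.2
      exact ((hasFDerivAt_id y).sub (hy'.const_smul (1 - t))).const_smul t⁻¹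
    · intro y hy
      refine det_min_le _ (hsym y hy.1.2) ht (hmonD y hy.1.2) ?_
      have := hy.2
      simpa [hP] using this
  calc ν B ≤ 0 + (μ (B ∩ D ∩ P) + μ (B ∩ D ∩ Pᶜ)) := by
        refine hsplit.trans ?_
        rw [z1]; gcongr
    _ = μ (B ∩ D) := by
        rw [zero_add, ← diff_eq, measure_inter_add_diff _ hPm]
    _ ≤ μ B := measure_mono inter_subset_left

end density

/-- All standing hypotheses of the theorem. -/
structure Setup {d : ℕ} (L : ℝ) (ρ₀ ρ₁ : EuclideanSpace ℝ (Fin d) → ℝ)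
    (ψ : EuclideanSpace ℝ (Fin d) → ℝ)
    (T : EuclideanSpace ℝ (Fin d) → EuclideanSpace ℝ (Fin d)) : Prop where
  hL : 0 < L
  h₀meas : Measurable ρ₀
  h₁meas : Measurable ρ₁
  h₀range : ∀ x, ρ₀ x ∈ Icc (0:ℝ) 1
  h₁range : ∀ x, ρ₁ x ∈ Icc (0:ℝ) 1
  h₀box : Function.support ρ₀ ⊆ box d L
  h₁box : Function.support ρ₁ ⊆ box d L
  hψ : GoodPsi ψ
  hT : Measurable T
  hgrad : ∀ᵐ x, HasGradientAt ψ (T x) x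
  hpush : (volume.withDensity fun x => ENNReal.ofReal (ρ₀ x)).map T =
      volume.withDensity fun x => ENNReal.ofReal (ρ₁ x)

section basic
variable {d : ℕ}

/-- measure with density -/
noncomputable def dens (ρ : EuclideanSpace ℝ (Fin d) → ℝ) : Measure (EuclideanSpace ℝ (Fin d)) :=
  volume.withDensity fun x => ENNReal.ofReal (ρ x)

theorem box_norm {L : ℝ} {x : EuclideanSpace ℝ (Fin d)} (hx : x ∈ box d L) :
    ‖x‖ ≤ Real.sqrt d * L := by
  rcases Nat.eq_zero_or_pos d with h | h
  · subst h
    have : x = 0 := Subsingleton.elim _ _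
    simp [this]
  have hL : 0 ≤ L := by
    have := hx ⟨0, h⟩
    have := this.1.trans this.2
    linarith
  rw [EuclideanSpace.norm_eq]
  apply Real.sqrt_le_iff.2
  refine ⟨by positivity, ?_⟩
  rw [mul_pow, Real.sq_sqrt (by positivity)]
  calc ∑ i, ‖x i‖ ^ 2 ≤ ∑ i : Fin d, L ^ 2 := by
        gcongr with i
        rw [Real.norm_eq_abs, abs_le]
        exact ⟨(hx i).1.le, (hx i).2.le⟩
    _ = d * L ^ 2 := by simp

theorem box_measurable (L : ℝ) : MeasurableSet (box d L) := by
  have : box d L = ⋂ j, {x | x j ∈ Ioo (-L) L} := by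
    ext x; simp [box]
  rw [this]
  refine MeasurableSet.iInter fun j => ?_
  have : Measurable (fun x : EuclideanSpace ℝ (Fin d) => x j) := by fun_prop
  exact this measurableSet_Ioo

theorem box_convex (L : ℝ) : Convex ℝ (box d L) := by
  intro x hx y hy a b ha hb hab j
  have := (convex_Ioo (-L) L) (hx j) (hy j) ha hb hab
  simpa using this

theorem box_finite (L : ℝ) : volume (box d L) < ⊤ := by
  have : box d L ⊆ Metric.closedBall 0 (Real.sqrt d * L) := by
    intro x hx
    simpa using box_norm hx
  exact (measure_mono this).trans_lt measure_closedBall_lt_top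

instance box_isFinite (L : ℝ) : IsFiniteMeasure (volume.restrict (box d L)) :=
  ⟨by simpa using box_finite L⟩

theorem dens_le {L : ℝ} {ρ : EuclideanSpace ℝ (Fin d) → ℝ} (hr : ∀ x, ρ x ∈ Icc (0:ℝ) 1)
    (hb : Function.support ρ ⊆ box d L) : dens ρ ≤ volume.restrict (box d L) := by
  rw [dens]
  calc volume.withDensity (fun x => ENNReal.ofReal (ρ x))
      ≤ volume.withDensity ((box d L).indicator 1) := by
        apply withDensity_mono
        refine Filter.Eventually.of_forall fun x => ?_
        by_cases hx : x ∈ box d L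
        · simpa [hx] using (hr x).2
        · have : ρ x = 0 := by
            by_contra h; exact hx (hb h)
          simp [this]
    _ = _ := withDensity_indicator_one (box_measurable L)

theorem integral_dens {L : ℝ} {ρ : EuclideanSpace ℝ (Fin d) → ℝ} (hm : Measurable ρ)
    (hr : ∀ x, ρ x ∈ Icc (0:ℝ) 1)
    (hb : Function.support ρ ⊆ box d L) (f : EuclideanSpace ℝ (Fin d) → ℝ) :
    ∫ x in box d L, ρ x * f x = ∫ x, f x ∂(dens ρ) := by
  rw [dens, integral_withDensity_eq_integral_toReal_smul (by fun_prop) (by simp)]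
  rw [setIntegral_eq_integral_of_forall_compl_eq_zero]
  · congr 1
    ext x
    rw [ENNReal.toReal_ofReal (hr x).1, smul_eq_mul]
  · intro x hx
    have : ρ x = 0 := by
      by_contra h; exact hx (hb h)
    simp [this]

end basic

namespace Setup
variable {d : ℕ} {L : ℝ} {ρ₀ ρ₁ : EuclideanSpace ℝ (Fin d) → ℝ}
    {ψ : EuclideanSpace ℝ (Fin d) → ℝ}
    {T : EuclideanSpace ℝ (Fin d) → EuclideanSpace ℝ (Fin d)}

theorem map_dens (h : Setup L ρ₀ ρ₁ ψ T) : (dens ρ₀).map T = dens ρ₁ := h.hpush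

theorem fin₀ (h : Setup L ρ₀ ρ₁ ψ T) : IsFiniteMeasure (dens ρ₀) :=
  isFiniteMeasure_of_le _ (dens_le h.h₀range h.h₀box)

theorem ae_box₀ (h : Setup L ρ₀ ρ₁ ψ T) : ∀ᵐ x ∂(dens ρ₀), x ∈ box d L :=
  (Measure.absolutelyContinuous_of_le (dens_le h.h₀range h.h₀box)).ae_le
    (ae_restrict_mem (box_measurable L))

theorem ae_boxT (h : Setup L ρ₀ ρ₁ ψ T) : ∀ᵐ x ∂(dens ρ₀), T x ∈ box d L := by
  have : ∀ᵐ x ∂(dens ρ₁), x ∈ box d L :=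
    (Measure.absolutelyContinuous_of_le (dens_le h.h₁range h.h₁box)).ae_le
      (ae_restrict_mem (box_measurable L))
  rw [← h.map_dens] at this
  exact ae_of_ae_map h.hT.aemeasurable this

theorem ac₀ : dens ρ₀ ≪ (volume : Measure (EuclideanSpace ℝ (Fin d))) :=
  withDensity_absolutelyContinuous _ _

theorem ae_grad (h : Setup L ρ₀ ρ₁ ψ T) : ∀ᵐ x ∂(dens ρ₀), HasGradientAt ψ (T x) x :=
  ac₀.ae_le h.hgrad

theorem integral_T (h : Setup L ρ₀ ρ₁ ψ T) {f : EuclideanSpace ℝ (Fin d) → ℝ}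
    (hf : Continuous f) : ∫ x in box d L, ρ₁ x * f x = ∫ x, f (T x) ∂(dens ρ₀) := by
  rw [integral_dens h.h₁meas h.h₁range h.h₁box, ← h.map_dens,
    integral_map h.hT.aemeasurable hf.aestronglyMeasurable]

end Setup

/-- boundedness of continuous functions on balls -/
theorem bdd_on_ball {d : ℕ} {F : Type*} [NormedAddCommGroup F]
    {f : EuclideanSpace ℝ (Fin d) × ℝ → F} (hf : Continuous f) (L : ℝ) :
    ∃ M, ∀ x ∈ box d L, ∀ t ∈ Icc (0:ℝ) 1, ‖f (x, t)‖ ≤ M := by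
  have hK : IsCompact ((Metric.closedBall (0 : EuclideanSpace ℝ (Fin d)) (Real.sqrt d * L)) ×ˢ Icc (0:ℝ) 1) :=
    (isCompact_closedBall _ _).prod isCompact_Icc
  obtain ⟨M, hM⟩ := hK.exists_bound_of_continuousOn hf.continuousOn
  refine ⟨M, fun x hx t ht => hM _ ⟨by simpa using box_norm hx, ht⟩⟩

section C1
variable {d : ℕ}

theorem c1_hasFDerivAt {φ : EuclideanSpace ℝ (Fin d) → ℝ → ℝ}
    (hφ : ContDiff ℝ 1 (fun z : EuclideanSpace ℝ (Fin d) × ℝ => φ z.1 z.2))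
    (x : EuclideanSpace ℝ (Fin d)) (t : ℝ) :
    HasFDerivAt (fun z : EuclideanSpace ℝ (Fin d) × ℝ => φ z.1 z.2)
      (fderiv ℝ (fun z : EuclideanSpace ℝ (Fin d) × ℝ => φ z.1 z.2) (x, t)) (x, t) :=
  (hφ.differentiable (by norm_num) (x, t)).hasFDerivAt

theorem c1_deriv {φ : EuclideanSpace ℝ (Fin d) → ℝ → ℝ}
    (hφ : ContDiff ℝ 1 (fun z : EuclideanSpace ℝ (Fin d) × ℝ => φ z.1 z.2))
    (x : EuclideanSpace ℝ (Fin d)) (t : ℝ) :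
    deriv (fun s => φ x s) t =
      fderiv ℝ (fun z : EuclideanSpace ℝ (Fin d) × ℝ => φ z.1 z.2) (x, t) (0, 1) := by
  have h1 : HasDerivAt (fun s : ℝ => ((x, s) : EuclideanSpace ℝ (Fin d) × ℝ)) (0, 1) t :=
    (hasDerivAt_const t x).prodMk (hasDerivAt_id t)
  exact ((c1_hasFDerivAt hφ x t).comp_hasDerivAt t h1).deriv

theorem c1_gradient {φ : EuclideanSpace ℝ (Fin d) → ℝ → ℝ}
    (hφ : ContDiff ℝ 1 (fun z : EuclideanSpace ℝ (Fin d) × ℝ => φ z.1 z.2))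
    (x : EuclideanSpace ℝ (Fin d)) (t : ℝ) :
    gradient (fun y => φ y t) x = (InnerProductSpace.toDual ℝ _).symm
      ((fderiv ℝ (fun z : EuclideanSpace ℝ (Fin d) × ℝ => φ z.1 z.2) (x, t)).comp
        (ContinuousLinearMap.inl ℝ _ ℝ)) := by
  have h1 : HasFDerivAt (fun y : EuclideanSpace ℝ (Fin d) => (y, t))
      (ContinuousLinearMap.inl ℝ _ ℝ) x := hasFDerivAt_prodMk_left x t
  have h2 := HasFDerivAt.comp (g := fun z : EuclideanSpace ℝ (Fin d) × ℝ => φ z.1 z.2)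
    x (c1_hasFDerivAt hφ x t) h1
  have h3 : HasFDerivAt (fun y => φ y t)
    ((fderiv ℝ (fun z : EuclideanSpace ℝ (Fin d) × ℝ => φ z.1 z.2) (x, t)).comp
        (ContinuousLinearMap.inl ℝ _ ℝ)) x := h2
  rw [gradient, h3.fderiv]

theorem c1_inner_gradient {φ : EuclideanSpace ℝ (Fin d) → ℝ → ℝ}
    (hφ : ContDiff ℝ 1 (fun z : EuclideanSpace ℝ (Fin d) × ℝ => φ z.1 z.2))
    (w x : EuclideanSpace ℝ (Fin d)) (t : ℝ) :
    ⟪w, gradient (fun y => φ y t) x⟫ =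
      fderiv ℝ (fun z : EuclideanSpace ℝ (Fin d) × ℝ => φ z.1 z.2) (x, t) (w, 0) := by
  rw [c1_gradient hφ, real_inner_comm, InnerProductSpace.toDual_symm_apply]
  rfl

theorem c1_deriv_cont {φ : EuclideanSpace ℝ (Fin d) → ℝ → ℝ}
    (hφ : ContDiff ℝ 1 (fun z : EuclideanSpace ℝ (Fin d) × ℝ => φ z.1 z.2)) :
    Continuous (fun z : EuclideanSpace ℝ (Fin d) × ℝ => deriv (fun s => φ z.1 s) z.2) := by
  simp_rw [c1_deriv hφ]
  exact (hφ.continuous_fderiv (by norm_num)).clm_apply continuous_const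

theorem c1_gradient_cont {φ : EuclideanSpace ℝ (Fin d) → ℝ → ℝ}
    (hφ : ContDiff ℝ 1 (fun z : EuclideanSpace ℝ (Fin d) × ℝ => φ z.1 z.2)) :
    Continuous (fun z : EuclideanSpace ℝ (Fin d) × ℝ => gradient (fun y => φ y z.2) z.1) := by
  simp_rw [c1_gradient hφ]
  exact (LinearIsometryEquiv.continuous _).comp
    ((hφ.continuous_fderiv (by norm_num)).clm_comp continuous_const)

theorem c1_curve {φ : EuclideanSpace ℝ (Fin d) → ℝ → ℝ}
    (hφ : ContDiff ℝ 1 (fun z : EuclideanSpace ℝ (Fin d) × ℝ => φ z.1 z.2))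
    {γ : ℝ → EuclideanSpace ℝ (Fin d)} {w : EuclideanSpace ℝ (Fin d)} {t : ℝ}
    (hγ : HasDerivAt γ w t) :
    HasDerivAt (fun s => φ (γ s) s)
      (deriv (fun s => φ (γ t) s) t + ⟪w, gradient (fun y => φ y t) (γ t)⟫) t := by
  have h1 : HasDerivAt (fun s : ℝ => (γ s, s)) (w, 1) t :=
    hγ.prodMk (hasDerivAt_id t)
  have h2 := HasFDerivAt.comp_hasDerivAt (f := fun s : ℝ => (γ s, s)) t
    (c1_hasFDerivAt hφ (γ t) t) h1
  have e : deriv (fun s => φ (γ t) s) t + ⟪w, gradient (fun y => φ y t) (γ t)⟫ =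
      fderiv ℝ (fun z : EuclideanSpace ℝ (Fin d) × ℝ => φ z.1 z.2) (γ t, t) (w, 1) := by
    rw [c1_deriv hφ, c1_inner_gradient hφ, ← map_add]
    simp
  rw [e]
  exact h2

end C1

section lower
variable {d : ℕ}

/-- space-time measure -/
noncomputable def stm (d : ℕ) (L : ℝ) : Measure (ℝ × EuclideanSpace ℝ (Fin d)) :=
  (volume.restrict (Icc (0:ℝ) 1)).prod (volume.restrict (box d L))

instance (L : ℝ) : IsFiniteMeasure (stm d L) := by unfold stm; infer_instance

theorem stm_ae_mem (L : ℝ) : ∀ᵐ q ∂(stm d L), q.2 ∈ box d L ∧ q.1 ∈ Ioo (0:ℝ) 1 := by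
  have h : stm d L = (volume.prod volume).restrict (Ioo (0:ℝ) 1 ×ˢ box d L) := by
    rw [stm, ← Measure.prod_restrict, Measure.restrict_congr_set Ioo_ae_eq_Icc]
  rw [h]
  filter_upwards [ae_restrict_mem (measurableSet_Ioo.prod (box_measurable L))] with q hq
  exact ⟨hq.2, hq.1⟩

variable {L : ℝ} {ρ₀ ρ₁ : EuclideanSpace ℝ (Fin d) → ℝ}
    {c : EuclideanSpace ℝ (Fin d) → ℝ → ℝ}
    {v : EuclideanSpace ℝ (Fin d) → ℝ → EuclideanSpace ℝ (Fin d)}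

theorem adm_meas_c (ha : RelaxedAdmissible L ρ₀ ρ₁ c v) :
    Measurable (fun q : ℝ × EuclideanSpace ℝ (Fin d) => c q.2 q.1) :=
  ha.1.comp measurable_swap

theorem adm_meas_v (ha : RelaxedAdmissible L ρ₀ ρ₁ c v) :
    Measurable (fun q : ℝ × EuclideanSpace ℝ (Fin d) => v q.2 q.1) :=
  ha.2.1.comp measurable_swap

theorem adm_range (ha : RelaxedAdmissible L ρ₀ ρ₁ c v) :
    ∀ᵐ q ∂(stm d L), c q.2 q.1 ∈ Icc (0:ℝ) 1 := by
  filter_upwards [stm_ae_mem L] with q hq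
  exact ha.2.2.1 _ hq.1 _ ⟨hq.2.1.le, hq.2.2.le⟩

theorem adm_int (ha : RelaxedAdmissible L ρ₀ ρ₁ c v) :
    Integrable (fun q : ℝ × EuclideanSpace ℝ (Fin d) => c q.2 q.1 * ‖v q.2 q.1‖ ^ 2)
      (stm d L) := by
  have hm : Measurable (fun q : ℝ × EuclideanSpace ℝ (Fin d) => c q.2 q.1 * ‖v q.2 q.1‖ ^ 2) :=
    (adm_meas_c ha).mul ((adm_meas_v ha).norm.pow_const 2)
  refine ⟨hm.aestronglyMeasurable, ?_⟩
  rw [hasFiniteIntegral_iff_ofReal]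
  · rw [stm, lintegral_prod _ hm.ennreal_ofReal.aemeasurable]
    exact ha.2.2.2.1
  · filter_upwards [adm_range ha] with q hq
    exact mul_nonneg hq.1 (by positivity)

theorem adm_action (ha : RelaxedAdmissible L ρ₀ ρ₁ c v) :
    (∫⁻ t in Icc (0:ℝ) 1, ∫⁻ x in box d L,
          ENNReal.ofReal ((1/2) * (c x t * ‖v x t‖ ^ 2))) =
    ENNReal.ofReal (∫ q, (1/2) * (c q.2 q.1 * ‖v q.2 q.1‖ ^ 2) ∂(stm d L)) := by
  have hm : Measurable (fun q : ℝ × EuclideanSpace ℝ (Fin d) =>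
      (1/2) * (c q.2 q.1 * ‖v q.2 q.1‖ ^ 2)) := ((adm_meas_c ha).mul ((adm_meas_v ha).norm.pow_const 2)).const_mul (1/2)
  rw [ofReal_integral_eq_lintegral_ofReal ((adm_int ha).const_mul _)]
  · rw [stm, lintegral_prod _ hm.ennreal_ofReal.aemeasurable]
  · filter_upwards [adm_range ha] with q hq
    have := hq.1
    simp only [Pi.zero_apply]
    positivity

theorem lower0 {ψ : EuclideanSpace ℝ (Fin d) → ℝ}
    {T : EuclideanSpace ℝ (Fin d) → EuclideanSpace ℝ (Fin d)} (h : Setup L ρ₀ ρ₁ ψ T)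
    (ha : RelaxedAdmissible L ρ₀ ρ₁ c v)
    {φ : EuclideanSpace ℝ (Fin d) → ℝ → ℝ}
    (hφ : ContDiff ℝ 1 (fun z : EuclideanSpace ℝ (Fin d) × ℝ => φ z.1 z.2)) :
    (∫ x, φ (T x) 1 ∂(dens ρ₀)) - (∫ x, φ x 0 ∂(dens ρ₀)) ≤
      (∫ q, (1/2) * (c q.2 q.1 * ‖v q.2 q.1‖ ^ 2) ∂(stm d L)) +
      ∫ q, c q.2 q.1 * (deriv (fun s => φ q.2 s) q.1
        + (1/2) * ‖gradient (fun y => φ y q.1) q.2‖ ^ 2) ∂(stm d L) := by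
  have hw := ha.2.2.2.2 φ hφ
  rw [h.integral_T (f := fun x => φ x 1)
    (hφ.continuous.comp (continuous_id.prodMk continuous_const)),
    integral_dens h.h₀meas h.h₀range h.h₀box] at hw
  rw [← hw]
  obtain ⟨M1, hM1⟩ := bdd_on_ball (c1_deriv_cont hφ) L
  obtain ⟨M2, hM2⟩ := bdd_on_ball (c1_gradient_cont hφ) L
  have mc := adm_meas_c ha
  have mv := adm_meas_v ha
  have m1 : Measurable (fun q : ℝ × EuclideanSpace ℝ (Fin d) => deriv (fun s => φ q.2 s) q.1) :=
    (c1_deriv_cont hφ).measurable.comp measurable_swap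
  have m2 : Measurable (fun q : ℝ × EuclideanSpace ℝ (Fin d) => gradient (fun y => φ y q.1) q.2) :=
    (c1_gradient_cont hφ).measurable.comp measurable_swap
  have i1 : Integrable (fun q : ℝ × EuclideanSpace ℝ (Fin d) => c q.2 q.1 *
        (deriv (fun s => φ q.2 s) q.1 + ⟪v q.2 q.1, gradient (fun y => φ y q.1) q.2⟫))
        (stm d L) := by
    refine Integrable.mono' (((adm_int ha).const_mul (1/2)).add
      (integrable_const (|M1| + M2 ^ 2 / 2)))
      (mc.mul (m1.add (mv.inner m2))).aestronglyMeasurable ?_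
    filter_upwards [adm_range ha, stm_ae_mem L] with q hc hq
    have hq' : q.1 ∈ Icc (0:ℝ) 1 := ⟨hq.2.1.le, hq.2.2.le⟩
    have b1 := hM1 _ hq.1 _ hq'
    have b2 := hM2 _ hq.1 _ hq'
    simp only [Pi.add_apply] at *
    rw [norm_mul, Real.norm_eq_abs, abs_of_nonneg hc.1]
    have b3 := abs_real_inner_le_norm (v q.2 q.1) (gradient (fun y => φ y q.1) q.2)
    have b4 : ‖deriv (fun s => φ q.2 s) q.1 + ⟪v q.2 q.1, gradient (fun y => φ y q.1) q.2⟫‖ ≤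
        (|M1| + M2 ^ 2 / 2) + (1/2) * ‖v q.2 q.1‖ ^ 2 := by
      refine (norm_add_le _ _).trans ?_
      rw [Real.norm_eq_abs ⟪v q.2 q.1, _⟫]
      have := le_abs_self M1
      have h0 := norm_nonneg (gradient (fun y => φ y q.1) q.2)
      nlinarith [sq_nonneg (‖v q.2 q.1‖ - ‖gradient (fun y => φ y q.1) q.2‖)]
    have := mul_le_mul_of_nonneg_left b4 hc.1
    have h6 : 0 ≤ |M1| + M2 ^ 2 / 2 := by positivity
    nlinarith [hc.2]
  have i2 : Integrable (fun q : ℝ × EuclideanSpace ℝ (Fin d) => c q.2 q.1 *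
        (deriv (fun s => φ q.2 s) q.1 + (1/2) * ‖gradient (fun y => φ y q.1) q.2‖ ^ 2))
        (stm d L) := by
    refine Integrable.mono' (integrable_const (|M1| + M2 ^ 2 / 2))
      (mc.mul (m1.add ((m2.norm.pow_const 2).const_mul _))).aestronglyMeasurable ?_
    filter_upwards [adm_range ha, stm_ae_mem L] with q hc hq
    have hq' : q.1 ∈ Icc (0:ℝ) 1 := ⟨hq.2.1.le, hq.2.2.le⟩
    have b1 := hM1 _ hq.1 _ hq'
    have b2 := hM2 _ hq.1 _ hq'
    simp only at *
    rw [norm_mul, Real.norm_eq_abs, abs_of_nonneg hc.1]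
    have b4 : ‖deriv (fun s => φ q.2 s) q.1 + (1/2) * ‖gradient (fun y => φ y q.1) q.2‖ ^ 2‖ ≤
        (|M1| + M2 ^ 2 / 2) := by
      refine (norm_add_le _ _).trans ?_
      rw [Real.norm_eq_abs ((1/2) * _), abs_of_nonneg (by positivity)]
      have := le_abs_self M1
      have h0 := norm_nonneg (gradient (fun y => φ y q.1) q.2)
      nlinarith
    have := mul_le_mul_of_nonneg_left b4 hc.1
    have h6 : 0 ≤ |M1| + M2 ^ 2 / 2 := by positivity
    nlinarith [hc.2]
  rw [← integral_add ((adm_int ha).const_mul (1/2)) i2]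
  have e := integral_prod _ (show Integrable _ ((volume.restrict (Icc (0:ℝ) 1)).prod (volume.restrict (box d L))) from i1)
  rw [← e]
  refine integral_mono_ae i1 (((adm_int ha).const_mul (1/2)).add i2) ?_
  filter_upwards [adm_range ha] with q hc
  have b3 := real_inner_le_norm (v q.2 q.1) (gradient (fun y => φ y q.1) q.2)
  have : ⟪v q.2 q.1, gradient (fun y => φ y q.1) q.2⟫ ≤ (1/2) * ‖v q.2 q.1‖ ^ 2
      + (1/2) * ‖gradient (fun y => φ y q.1) q.2‖ ^ 2 := by
    nlinarith [sq_nonneg (‖v q.2 q.1‖ - ‖gradient (fun y => φ y q.1) q.2‖)]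
  have := mul_le_mul_of_nonneg_left this hc.1
  linarith

end lower

section cutoff

/-- bounded `C¹` extension of the identity on `[0,1]`. -/
theorem exists_sigma {ε : ℝ} (hε : 0 < ε) : ∃ σ : ℝ → ℝ, ContDiff ℝ 1 σ ∧
    (∀ t ∈ Icc (0:ℝ) 1, σ t = t) ∧ (∀ t, σ t ∈ Icc (-ε) (1 + ε)) ∧ (∀ t, t ≤ 0 → σ t ≤ 0) := by
  let χ : ContDiffBump (1/2 : ℝ) := ⟨1/2, 1/2 + ε, by norm_num, by linarith⟩
  refine ⟨fun t => t * χ t, contDiff_id.mul χ.contDiff, ?_, ?_, ?_⟩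
  · intro t ht
    have : χ t = 1 := by
      apply χ.one_of_mem_closedBall
      rw [Metric.mem_closedBall, Real.dist_eq, abs_le]
      constructor <;> simp only [χ] <;> linarith [ht.1, ht.2]
    simp [this]
  · intro t
    have h0 : 0 ≤ χ t := χ.nonneg
    have h1 : χ t ≤ 1 := χ.le_one
    by_cases h : 1/2 + ε ≤ dist t (1/2)
    · have : χ t = 0 := χ.zero_of_le_dist h
      simp only [this, mul_zero]
      constructor <;> linarith
    · push Not at h
      rw [Real.dist_eq, abs_lt] at h
      constructor
      · nlinarith
      · nlinarith
  · intro t ht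
    have h0 : 0 ≤ χ t := χ.nonneg
    show t * χ t ≤ 0
    nlinarith

theorem exists_alpha {ε κ : ℝ} (hε : 0 < ε) (hε2 : ε < 1/2) (hκ : 0 < κ) (hκ1 : κ ≤ 1)
    (hεκ : ε ≤ κ / 2) : ∃ α : ℝ → ℝ, ContDiff ℝ 1 α ∧
    (∀ t ∈ Icc (0:ℝ) 1, α t = (ε + (1 - 2 * ε) * t)⁻¹) ∧ (∀ t, 1 < α t) ∧
    (∀ t, t ≤ 1 - κ → κ / 2 ≤ α t - 1) := by
  obtain ⟨σ, h1, h2, h3, h4⟩ := exists_sigma hε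
  have hA : 0 < 1 - 2 * ε := by linarith
  have hpos : ∀ t, 0 < ε + (1 - 2 * ε) * σ t := by
    intro t
    have := (h3 t).1
    nlinarith [mul_le_mul_of_nonneg_left this hA.le, mul_pos hε hε]
  have hlt : ∀ t, ε + (1 - 2 * ε) * σ t < 1 := by
    intro t
    have := (h3 t).2
    nlinarith [mul_le_mul_of_nonneg_left this hA.le, mul_pos hε hε]
  refine ⟨fun t => (ε + (1 - 2 * ε) * σ t)⁻¹, ?_, ?_, ?_, ?_⟩
  · exact (contDiff_const.add (contDiff_const.mul h1)).inv (fun t => (hpos t).ne')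
  · intro t ht; simp only [h2 t ht]
  · intro t
    exact (one_lt_inv₀ (hpos t)).2 (hlt t)
  · intro t ht
    have hs : σ t ≤ 1 - κ := by
      rcases le_total t 0 with h | h
      · linarith [h4 t h]
      · rw [h2 t ⟨h, by linarith⟩]; exact ht
    have h5 : ε + (1 - 2 * ε) * σ t ≤ 1 - κ / 2 := by
      nlinarith [mul_le_mul_of_nonneg_left hs hA.le, mul_nonneg hε.le (sub_nonneg.2 hκ1)]
    have h6 : (1 - κ / 2)⁻¹ ≤ (ε + (1 - 2 * ε) * σ t)⁻¹ :=
      inv_anti₀ (hpos t) h5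
    have h7 : 1 + κ / 2 ≤ (1 - κ / 2)⁻¹ := by
      rw [← one_div, le_div_iff₀ (by linarith)]
      nlinarith
    linarith

end cutoff

section propL
variable {d : ℕ} {L : ℝ} {ρ₀ ρ₁ : EuclideanSpace ℝ (Fin d) → ℝ}
    {c : EuclideanSpace ℝ (Fin d) → ℝ → ℝ}
    {v : EuclideanSpace ℝ (Fin d) → ℝ → EuclideanSpace ℝ (Fin d)}
    {ψ : EuclideanSpace ℝ (Fin d) → ℝ}
    {T : EuclideanSpace ℝ (Fin d) → EuclideanSpace ℝ (Fin d)}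

theorem Setup.intT (h : Setup L ρ₀ ρ₁ ψ T) {f : EuclideanSpace ℝ (Fin d) → ℝ}
    (hf : Continuous f) : Integrable (fun x => f (T x)) (dens ρ₀) := by
  have := h.fin₀
  obtain ⟨M, hM⟩ := bdd_on_ball (f := fun z => f z.1) (by fun_prop) L
  refine Integrable.mono' (integrable_const M)
    (hf.measurable.comp h.hT).aestronglyMeasurable ?_
  filter_upwards [h.ae_boxT] with x hx
  exact hM _ hx 0 (by simp)

theorem Setup.int0 (h : Setup L ρ₀ ρ₁ ψ T) {f : EuclideanSpace ℝ (Fin d) → ℝ}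
    (hf : Continuous f) : Integrable f (dens ρ₀) := by
  have := h.fin₀
  obtain ⟨M, hM⟩ := bdd_on_ball (f := fun z => f z.1) (by fun_prop) L
  refine Integrable.mono' (integrable_const M) hf.measurable.aestronglyMeasurable ?_
  filter_upwards [h.ae_box₀] with x hx
  exact hM _ hx 0 (by simp)

theorem Setup.intI (h : Setup L ρ₀ ρ₁ ψ T) :
    Integrable (fun x => ‖T x - x‖ ^ 2) (dens ρ₀) := by
  have := h.fin₀
  refine Integrable.mono' (integrable_const ((Real.sqrt d * L + Real.sqrt d * L) ^ 2))
    ((h.hT.sub measurable_id).norm.pow_const 2).aestronglyMeasurable ?_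
  filter_upwards [h.ae_box₀, h.ae_boxT] with x hx hx'
  rw [Real.norm_eq_abs, abs_of_nonneg (by positivity)]
  gcongr
  exact (norm_sub_le _ _).trans (add_le_add (box_norm hx') (box_norm hx))

theorem propL (h : Setup L ρ₀ ρ₁ ψ T)
    (ha : RelaxedAdmissible L ρ₀ ρ₁ c v) {η : EuclideanSpace ℝ (Fin d) → ℝ} {C : ℝ}
    (hη : GoodEta η C) {ε κ : ℝ} (hε : 0 < ε) (hε2 : ε < 1/2) (hκ : 0 < κ) (hκ1 : κ ≤ 1)
    (hεκ : ε ≤ κ / 2) {k : ℝ → ℝ} (hk : ContDiff ℝ 1 k) (hk0 : ∀ t, 1 - κ < t → k t = 0)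
    (hkC : ∀ t, |k t| * C < κ / 2) :
    (1 - 2 * ε) * ((1/2) * (∫ x, ‖T x - x‖ ^ 2 ∂(dens ρ₀)) - k 0 * ∫ x, η x ∂(dens ρ₀)) ≤
      (∫ q, (1/2) * (c q.2 q.1 * ‖v q.2 q.1‖ ^ 2) ∂(stm d L)) +
      (1 - 2 * ε) * ∫ q, c q.2 q.1 * (deriv k q.1 *
        η (Smax ψ η ((ε + (1 - 2 * ε) * q.1)⁻¹ • q.2, (ε + (1 - 2 * ε) * q.1)⁻¹ - 1, k q.1)))
          ∂(stm d L) := by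
  have := h.fin₀
  obtain ⟨α, hα, hα1, hα2, hα3⟩ := exists_alpha hε hε2 hκ hκ1 hεκ
  have hA : 0 < 1 - 2 * ε := by linarith
  have hkα : ∀ t, |k t| * C < α t - 1 := by
    intro t
    rcases le_or_gt t (1 - κ) with ht | ht
    · exact (hkC t).trans_le (hα3 t ht)
    · rw [hk0 t ht]; simpa using hα2 t
  have hφ0 := phi_contDiff h.hψ hη hkα hα hk
  set φ : EuclideanSpace ℝ (Fin d) → ℝ → ℝ := fun y t => (1 - 2 * ε) * phi ψ η (α t) (k t) y with hφd
  have hφ : ContDiff ℝ 1 (fun z : EuclideanSpace ℝ (Fin d) × ℝ => φ z.1 z.2) :=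
    contDiff_const.mul hφ0
  have hl := lower0 h ha hφ
  have e : ∫ q, c q.2 q.1 * (deriv (fun s => φ q.2 s) q.1
        + (1/2) * ‖gradient (fun y => φ y q.1) q.2‖ ^ 2) ∂(stm d L) =
      (1 - 2 * ε) * ∫ q, c q.2 q.1 * (deriv k q.1 *
        η (Smax ψ η ((ε + (1 - 2 * ε) * q.1)⁻¹ • q.2, (ε + (1 - 2 * ε) * q.1)⁻¹ - 1, k q.1)))
          ∂(stm d L) := by
    rw [← integral_const_mul]
    apply integral_congr_ae
    filter_upwards [stm_ae_mem L] with q hq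
    obtain ⟨hq1, ht⟩ := hq
    have htI : q.1 ∈ Icc (0:ℝ) 1 := ⟨ht.1.le, ht.2.le⟩
    have hτ : 0 < ε + (1 - 2 * ε) * q.1 := by
      have := mul_pos hA ht.1; linarith
    have hαd : HasDerivAt α (-(1 - 2 * ε) * (α q.1) ^ 2) q.1 := by
      have h1 : HasDerivAt (fun t => (ε + (1 - 2 * ε) * t)⁻¹)
          (-((1 - 2 * ε) * 1) / (ε + (1 - 2 * ε) * q.1) ^ 2) q.1 :=
        (((hasDerivAt_id q.1).const_mul (1 - 2 * ε)).const_add ε).inv hτ.ne'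
      have h2 : HasDerivAt α (-((1 - 2 * ε) * 1) / (ε + (1 - 2 * ε) * q.1) ^ 2) q.1 := by
        refine h1.congr_of_eventuallyEq ?_
        filter_upwards [isOpen_Ioo.mem_nhds ht] with t ht
        exact hα1 t ⟨ht.1.le, ht.2.le⟩
      have e3 : -(1 - 2 * ε) * (α q.1) ^ 2 = -((1 - 2 * ε) * 1) / (ε + (1 - 2 * ε) * q.1) ^ 2 := by
        rw [hα1 _ htI]; field_simp
      rw [e3]; exact h2
    have hkd : HasDerivAt k (deriv k q.1) q.1 :=
      (hk.differentiable (by norm_num) q.1).hasDerivAt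
    have d1 := ((phi_hasDerivAt h.hψ hη (hkα q.1) hαd hkd q.2).const_mul (1 - 2 * ε)).deriv
    have d2 : gradient (fun y => φ y q.1) q.2 = (1 - 2 * ε) • (α q.1 • (q.2 - Smax ψ η (α q.1 • q.2, α q.1 - 1, k q.1))) := by
      have h1 := (phi_hasGradientAt h.hψ hη (hkα q.1) q.2).hasFDerivAt.const_mul (1 - 2 * ε)
      refine HasGradientAt.gradient (hasGradientAt_iff_hasFDerivAt.2 ?_)
      rw [map_smulₛₗ]
      exact h1
    have d1' : deriv (fun s => φ q.2 s) q.1 = _ := d1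
    rw [d1', d2, ← hα1 _ htI]
    rw [norm_smul, norm_smul, mul_pow, mul_pow, Real.norm_eq_abs, Real.norm_eq_abs, sq_abs, sq_abs]
    ring
  rw [e] at hl
  refine le_trans ?_ hl
  have c1 : Continuous (fun x => φ x 1) :=
    hφ.continuous.comp (continuous_id.prodMk continuous_const)
  have c0 : Continuous (fun x => φ x 0) :=
    hφ.continuous.comp (continuous_id.prodMk continuous_const)
  rw [← integral_sub (h.intT c1) (h.int0 c0), ← integral_const_mul, ← integral_const_mul,
    ← integral_sub (h.intI.const_mul _) ((h.int0 hη.continuous).const_mul _), ← integral_const_mul]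
  refine integral_mono_ae (((h.intI.const_mul _).sub ((h.int0 hη.continuous).const_mul _)).const_mul _)
    ((h.intT c1).sub (h.int0 c0)) ?_
  filter_upwards [h.ae_grad] with x hx
  have l1 := phi_ge (η := η) (hα2 1) x (T x) (subgrad_of_hasGradientAt h.hψ.conv hx)
  have l0 := phi_le h.hψ hη (hkα 0) x x
  have hk1 : k 1 = 0 := hk0 1 (by linarith)
  show (1 - 2 * ε) * (1 / 2 * ‖T x - x‖ ^ 2 - k 0 * η x) ≤
    (1 - 2 * ε) * phi ψ η (α 1) (k 1) (T x) - (1 - 2 * ε) * phi ψ η (α 0) (k 0) x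
  rw [← mul_sub, hk1]
  apply mul_le_mul_of_nonneg_left _ hA.le
  simp only [sub_self, norm_zero] at l0
  linarith

theorem lower_main (h : Setup L ρ₀ ρ₁ ψ T) (ha : RelaxedAdmissible L ρ₀ ρ₁ c v) :
    (1/2) * (∫ x, ‖T x - x‖ ^ 2 ∂(dens ρ₀)) ≤
      ∫ q, (1/2) * (c q.2 q.1 * ‖v q.2 q.1‖ ^ 2) ∂(stm d L) := by
  have key : ∀ ε : ℝ, 0 < ε → ε < 1/2 → (1 - 2 * ε) * ((1/2) * (∫ x, ‖T x - x‖ ^ 2 ∂(dens ρ₀))) ≤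
      ∫ q, (1/2) * (c q.2 q.1 * ‖v q.2 q.1‖ ^ 2) ∂(stm d L) := by
    intro ε h1 h2
    have := propL h ha (GoodEta.zero) (κ := 1) (k := fun _ => 0) h1 h2 one_pos le_rfl (by linarith)
      contDiff_const (by simp) (by simp)
    simpa using this
  refine le_of_tendsto (f := fun ε : ℝ => (1 - 2 * ε) * ((1/2) * (∫ x, ‖T x - x‖ ^ 2 ∂(dens ρ₀))))
    (x := nhdsWithin 0 (Ioi 0)) ?_ ?_
  · have : Continuous (fun ε : ℝ => (1 - 2 * ε) * ((1/2) * (∫ x, ‖T x - x‖ ^ 2 ∂(dens ρ₀)))) := by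
      fun_prop
    have := this.tendsto 0
    simp only [mul_zero, sub_zero, one_mul] at this
    exact this.mono_left nhdsWithin_le_nhds
  · filter_upwards [Ioo_mem_nhdsGT (show (0:ℝ) < 1/2 by norm_num)] with ε hε
    exact key ε hε.1 hε.2

end propL

section wass
variable {d : ℕ} {L : ℝ} {ρ₀ ρ₁ : EuclideanSpace ℝ (Fin d) → ℝ}
    {ψ : EuclideanSpace ℝ (Fin d) → ℝ}
    {T : EuclideanSpace ℝ (Fin d) → EuclideanSpace ℝ (Fin d)}

theorem Setup.I_eq (h : Setup L ρ₀ ρ₁ ψ T) :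
    ∫⁻ x, ENNReal.ofReal (‖x - T x‖ ^ 2) ∂(dens ρ₀) =
      ENNReal.ofReal (∫ x, ‖T x - x‖ ^ 2 ∂(dens ρ₀)) := by
  rw [ofReal_integral_eq_lintegral_ofReal h.intI (Filter.Eventually.of_forall fun x => by positivity)]
  simp_rw [norm_sub_rev]

theorem phi_zero_cont (hψ : GoodPsi ψ) {a : ℝ} (ha : 1 < a) :
    Continuous (phi ψ (fun _ => 0) a 0) := by
  rw [continuous_iff_continuousAt]
  intro y
  exact (phi_hasGradientAt hψ GoodEta.zero (a := a) (k := 0)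
    (by simpa using ha) y).hasFDerivAt.continuousAt

theorem W2sq_eq (h : Setup L ρ₀ ρ₁ ψ T) :
    W2sq (dens ρ₀) (dens ρ₁) = ENNReal.ofReal (∫ x, ‖T x - x‖ ^ 2 ∂(dens ρ₀)) := by
  have := h.fin₀
  apply le_antisymm
  · apply sInf_le
    have hm : Measurable (fun x => (x, T x)) := measurable_id.prodMk h.hT
    refine ⟨(dens ρ₀).map (fun x => (x, T x)), ?_, ?_, ?_⟩
    · rw [Measure.map_map measurable_fst hm]
      exact Measure.map_id
    · rw [Measure.map_map measurable_snd hm]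
      exact h.map_dens
    · rw [lintegral_map (by fun_prop) hm, ← h.I_eq]
  · apply le_sInf
    rintro K ⟨π, h1, h2, rfl⟩
    have hπ : IsFiniteMeasure π := by
      constructor
      have : π univ = (dens ρ₀) univ := by
        rw [← h1, Measure.map_apply measurable_fst MeasurableSet.univ, preimage_univ]
      rw [this]; exact measure_lt_top _ _
    have b1 : ∀ᵐ q ∂π, q.1 ∈ box d L := by
      have := h.ae_box₀
      rw [← h1] at this
      exact ae_of_ae_map measurable_fst.aemeasurable this
    have b2 : ∀ᵐ q ∂π, q.2 ∈ box d L := by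
      have := h.ae_boxT
      have : ∀ᵐ x ∂(dens ρ₁), x ∈ box d L := by
        rw [← h.map_dens]
        exact (ae_map_iff h.hT.aemeasurable (box_measurable L)).2 this
      rw [← h2] at this
      exact ae_of_ae_map measurable_snd.aemeasurable this
    have iπ : Integrable (fun q => ‖q.1 - q.2‖ ^ 2) π := by
      refine Integrable.mono' (integrable_const ((Real.sqrt d * L + Real.sqrt d * L) ^ 2))
        (by fun_prop) ?_
      filter_upwards [b1, b2] with x hx hx'
      rw [Real.norm_eq_abs, abs_of_nonneg (by positivity)]
      gcongr
      exact (norm_sub_le _ _).trans (add_le_add (box_norm hx) (box_norm hx'))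
    rw [← ofReal_integral_eq_lintegral_ofReal iπ (Filter.Eventually.of_forall fun x => by positivity)]
    apply ENNReal.ofReal_le_ofReal
    have key : ∀ a : ℝ, 1 < a → ∫ x, ‖T x - x‖ ^ 2 ∂(dens ρ₀) ≤ a * ∫ q, ‖q.1 - q.2‖ ^ 2 ∂π := by
      intro a ha
      have cφ := phi_zero_cont h.hψ ha
      have cψ : Continuous (fun x => ψ x - ‖x‖ ^ 2 / 2) := by
        have := h.hψ.cont
        fun_prop
      have iφ : Integrable (phi ψ (fun _ => 0) a 0) (dens ρ₁) := by
        rw [← h.map_dens, integrable_map_measure cφ.aestronglyMeasurable h.hT.aemeasurable]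
        exact h.intT cφ
      have iφ' : Integrable (fun q : EuclideanSpace ℝ (Fin d) × EuclideanSpace ℝ (Fin d) =>
          phi ψ (fun _ => 0) a 0 q.2) π := by
        rw [← h2, integrable_map_measure cφ.aestronglyMeasurable measurable_snd.aemeasurable] at iφ
        exact iφ
      have iψ := h.int0 cψ
      have iψ' : Integrable (fun q : EuclideanSpace ℝ (Fin d) × EuclideanSpace ℝ (Fin d) =>
          ψ q.1 - ‖q.1‖ ^ 2 / 2) π := by
        rw [← h1, integrable_map_measure cψ.aestronglyMeasurable measurable_fst.aemeasurable] at iψ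
        exact iψ
      have e1 : ∫ q, phi ψ (fun _ => 0) a 0 q.2 ∂π = ∫ x, phi ψ (fun _ => 0) a 0 (T x) ∂(dens ρ₀) := by
        rw [← integral_map (φ := Prod.snd) measurable_snd.aemeasurable cφ.aestronglyMeasurable, h2, ← h.map_dens,
          integral_map h.hT.aemeasurable cφ.aestronglyMeasurable]
      have e2 : ∫ q, (ψ q.1 - ‖q.1‖ ^ 2 / 2) ∂π = ∫ x, (ψ x - ‖x‖ ^ 2 / 2) ∂(dens ρ₀) := by
        rw [← integral_map (φ := Prod.fst) (f := fun x => ψ x - ‖x‖ ^ 2 / 2)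
          measurable_fst.aemeasurable cψ.aestronglyMeasurable, h1]
      have l1 : (∫ x, phi ψ (fun _ => 0) a 0 (T x) ∂(dens ρ₀)) - ∫ x, (ψ x - ‖x‖ ^ 2 / 2) ∂(dens ρ₀) ≤
          a / 2 * ∫ q, ‖q.1 - q.2‖ ^ 2 ∂π := by
        rw [← e1, ← e2, ← integral_sub iφ' iψ', ← integral_const_mul]
        refine integral_mono (iφ'.sub iψ') (iπ.const_mul _) fun q => ?_
        have := phi_le h.hψ GoodEta.zero (a := a) (k := 0) (by simpa using ha) q.1 q.2
        rw [norm_sub_rev] at this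
        show phi ψ (fun _ => 0) a 0 q.2 - (ψ q.1 - ‖q.1‖ ^ 2 / 2) ≤ a / 2 * ‖q.1 - q.2‖ ^ 2
        linarith
      have l2 : (1/2) * ∫ x, ‖T x - x‖ ^ 2 ∂(dens ρ₀) ≤
          (∫ x, phi ψ (fun _ => 0) a 0 (T x) ∂(dens ρ₀)) - ∫ x, (ψ x - ‖x‖ ^ 2 / 2) ∂(dens ρ₀) := by
        rw [← integral_sub (h.intT cφ) iψ, ← integral_const_mul]
        refine integral_mono_ae (h.intI.const_mul _) ((h.intT cφ).sub iψ) ?_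
        filter_upwards [h.ae_grad] with x hx
        have := phi_ge (η := fun _ => 0) ha x (T x) (subgrad_of_hasGradientAt h.hψ.conv hx)
        show (1/2) * ‖T x - x‖ ^ 2 ≤ phi ψ (fun _ => 0) a 0 (T x) - (ψ x - ‖x‖ ^ 2 / 2)
        linarith
      linarith
    refine ge_of_tendsto (f := fun a : ℝ => a * ∫ q, ‖q.1 - q.2‖ ^ 2 ∂π)
      (x := nhdsWithin 1 (Ioi 1)) ?_ ?_
    · have : Continuous (fun a : ℝ => a * ∫ q, ‖q.1 - q.2‖ ^ 2 ∂π) := by fun_prop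
      have := this.tendsto 1
      simp only [one_mul] at this
      exact this.mono_left nhdsWithin_le_nhds
    · filter_upwards [self_mem_nhdsWithin] with a ha
      exact key a ha

end wass

section St
variable {E : Type*} [NormedAddCommGroup E] [InnerProductSpace ℝ E] [FiniteDimensional ℝ E]

/-- inverse of the interpolation map at time `t`. -/
noncomputable def St (ψ : E → ℝ) (t : ℝ) (y : E) : E :=
  Smax ψ (fun _ => 0) (t⁻¹ • y, t⁻¹ - 1, 0)

theorem tinv_pos {t : ℝ} (ht : t ∈ Ioo (0:ℝ) 1) : 0 < t⁻¹ - 1 :=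
  sub_pos.2 ((one_lt_inv₀ ht.1).2 ht.2)

theorem St_interp {ψ : E → ℝ} (hψ : GoodPsi ψ) {t : ℝ} (ht : t ∈ Ioo (0:ℝ) 1) {x p : E}
    (hp : HasGradientAt ψ p x) : St ψ t ((1 - t) • x + t • p) = x := by
  have h := Smax_grad hψ GoodEta.zero (tinv_pos ht) x p (subgrad_of_hasGradientAt hψ.conv hp)
  have e : t⁻¹ • ((1 - t) • x + t • p) = (t⁻¹ - 1) • x + p := by
    have := ht.1.ne'
    rw [smul_add, smul_smul, smul_smul, inv_mul_cancel₀ this, one_smul, mul_sub,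
      inv_mul_cancel₀ this, mul_one]
  rw [St, e, h]

theorem interp_St {ψ : E → ℝ} (hψ : GoodPsi ψ) {t : ℝ} (ht : t ∈ Ioo (0:ℝ) 1) {y p : E}
    (hp : HasGradientAt ψ p (St ψ t y)) : (1 - t) • St ψ t y + t • p = y := by
  have h := subgrad_unique hp (Smax_subgrad hψ GoodEta.zero (tinv_pos ht) (t⁻¹ • y))
  have h0 := ht.1.ne'
  rw [← h, smul_sub, smul_smul, smul_smul, mul_inv_cancel₀ h0, one_smul, mul_sub,
    mul_inv_cancel₀ h0, mul_one, St]
  abel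

theorem St_mono {ψ : E → ℝ} (hψ : GoodPsi ψ) {t : ℝ} (ht : t ∈ Ioo (0:ℝ) 1) (y y' : E) :
    (1 - t) * ‖St ψ t y - St ψ t y'‖ ^ 2 ≤ ⟪St ψ t y - St ψ t y', y - y'⟫ := by
  have h1 := Smax_subgrad hψ GoodEta.zero (tinv_pos ht) (t⁻¹ • y) (St ψ t y')
  have h2 := Smax_subgrad hψ GoodEta.zero (tinv_pos ht) (t⁻¹ • y') (St ψ t y)
  change ψ (St ψ t y) + ⟪t⁻¹ • y - (t⁻¹ - 1) • St ψ t y, St ψ t y' - St ψ t y⟫ ≤ _ at h1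
  change ψ (St ψ t y') + ⟪t⁻¹ • y' - (t⁻¹ - 1) • St ψ t y', St ψ t y - St ψ t y'⟫ ≤ _ at h2
  generalize St ψ t y = S at *
  generalize St ψ t y' = S' at *
  have h3 : 0 ≤ ⟪(t⁻¹ • y - (t⁻¹ - 1) • S) - (t⁻¹ • y' - (t⁻¹ - 1) • S'), S - S'⟫ := by
    rw [inner_sub_left]
    have : S' - S = - (S - S') := by abel
    rw [this, inner_neg_right] at h1
    linarith
  have h4 : (t⁻¹ • y - (t⁻¹ - 1) • S) - (t⁻¹ • y' - (t⁻¹ - 1) • S') =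
      t⁻¹ • (y - y') - (t⁻¹ - 1) • (S - S') := by
    rw [smul_sub, smul_sub]; abel
  rw [h4, inner_sub_left, real_inner_smul_left, real_inner_smul_left, real_inner_self_eq_norm_sq] at h3
  have h5 := mul_nonneg ht.1.le h3
  have h0 := ht.1.ne'
  have h6 : t * (t⁻¹ * ⟪y - y', S - S'⟫ - (t⁻¹ - 1) * ‖S - S'‖ ^ 2) =
      ⟪y - y', S - S'⟫ - (1 - t) * ‖S - S'‖ ^ 2 := by
    field_simp
  rw [h6] at h5
  rw [real_inner_comm]
  linarith

theorem St_grad {ψ : E → ℝ} (hψ : GoodPsi ψ) {t : ℝ} (ht : t ∈ Ioo (0:ℝ) 1) (y : E) :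
    HasGradientAt (fun y => t * Gfun ψ (fun _ => 0) (t⁻¹ • y, t⁻¹ - 1, 0)) (St ψ t y) y := by
  have hq : ((t⁻¹ • y, t⁻¹ - 1, 0) : E × ℝ × ℝ) ∈ Udom E 0 := by
    simpa [Udom] using tinv_pos ht
  have hG := Gfun_hasFDerivAt hψ GoodEta.zero hq
  have hin : HasFDerivAt (fun y : E => ((t⁻¹ • y, t⁻¹ - 1, 0) : E × ℝ × ℝ))
      ((t⁻¹ • ContinuousLinearMap.id ℝ E).prod 0) y :=
    (((hasFDerivAt_id y).const_smul t⁻¹).prodMk (hasFDerivAt_const _ _))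
  have h1 := (hG.comp y hin).const_mul t
  rw [hasGradientAt_iff_hasFDerivAt]
  refine h1.congr_fderiv ?_
  ext v
  have := ht.1.ne'
  simp [ell_apply, inner_smul_left, St, real_inner_comm, this]

theorem St_contOn {ψ : E → ℝ} (hψ : GoodPsi ψ) :
    ContinuousOn (fun q : E × ℝ => St ψ q.2 q.1) (univ ×ˢ Ioo (0:ℝ) 1) := by
  intro q hq
  have ht : q.2 ∈ Ioo (0:ℝ) 1 := hq.2
  apply ContinuousAt.continuousWithinAt
  have hq' : ((q.2⁻¹ • q.1, q.2⁻¹ - 1, 0) : E × ℝ × ℝ) ∈ Udom E 0 := by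
    simpa [Udom] using tinv_pos ht
  have h1 := Smax_continuousAt hψ GoodEta.zero hq'
  have h2 : ContinuousAt (fun q : E × ℝ => ((q.2⁻¹ • q.1, q.2⁻¹ - 1, 0) : E × ℝ × ℝ)) q := by
    have h3 : ContinuousAt (fun q : E × ℝ => q.2⁻¹) q := continuousAt_snd.inv₀ ht.1.ne'
    exact (h3.smul continuousAt_fst).prodMk ((h3.sub continuousAt_const).prodMk continuousAt_const)
  exact ContinuousAt.comp (f := fun q : E × ℝ => ((q.2⁻¹ • q.1, q.2⁻¹ - 1, 0) : E × ℝ × ℝ)) h1 h2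

end St

section exist
variable {d : ℕ} {L : ℝ} {ρ₀ ρ₁ : EuclideanSpace ℝ (Fin d) → ℝ}
    {ψ : EuclideanSpace ℝ (Fin d) → ℝ}
    {T : EuclideanSpace ℝ (Fin d) → EuclideanSpace ℝ (Fin d)}

theorem Setup.measTt (h : Setup L ρ₀ ρ₁ ψ T) (t : ℝ) :
    Measurable (fun x => (1 - t) • x + t • T x) := by
  have := h.hT
  fun_prop

theorem Setup.interp_le_vol (h : Setup L ρ₀ ρ₁ ψ T) {t : ℝ} (ht : t ∈ Ioo (0:ℝ) 1) :
    (dens ρ₀).map (fun x => (1 - t) • x + t • T x) ≤ volume := by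
  have le0 : dens ρ₀ ≤ volume := (dens_le h.h₀range h.h₀box).trans Measure.restrict_le_self
  have le1 : dens ρ₁ ≤ volume := (dens_le h.h₁range h.h₁box).trans Measure.restrict_le_self
  refine density_bound volume _ ht (fun y => St_grad h.hψ ht y) (St_mono h.hψ ht) ?_ ?_
  · intro B hB
    rw [Measure.map_apply (h.measTt t) hB]
    refine le_trans (measure_mono_ae ?_) (le0 _)
    filter_upwards [h.ae_grad] with x hx hxB
    exact ⟨_, hxB, St_interp h.hψ ht hx⟩
  · intro B hB
    rw [Measure.map_apply (h.measTt t) hB]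
    set R := (fun y => t⁻¹ • (y - (1 - t) • St ψ t y)) '' B with hR
    rw [← measure_toMeasurable R]
    refine le_trans ?_ (le1 _)
    rw [← h.map_dens, Measure.map_apply h.hT (measurableSet_toMeasurable _ _)]
    refine measure_mono_ae ?_
    filter_upwards [h.ae_grad] with x hx hxB
    refine subset_toMeasurable _ _ ⟨_, hxB, ?_⟩
    show t⁻¹ • ((1 - t) • x + t • T x - (1 - t) • St ψ t ((1 - t) • x + t • T x)) = T x
    rw [St_interp h.hψ ht hx, add_sub_cancel_left, smul_smul, inv_mul_cancel₀ ht.1.ne', one_smul]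

theorem Setup.ae_interp_box (h : Setup L ρ₀ ρ₁ ψ T) :
    ∀ᵐ x ∂(dens ρ₀), ∀ t ∈ Icc (0:ℝ) 1, (1 - t) • x + t • T x ∈ box d L := by
  filter_upwards [h.ae_box₀, h.ae_boxT] with x h1 h2 t ht
  exact box_convex L h1 h2 (by linarith [ht.2]) ht.1 (by ring)

theorem Setup.interp_le (h : Setup L ρ₀ ρ₁ ψ T) {t : ℝ} (ht : t ∈ Icc (0:ℝ) 1) :
    (dens ρ₀).map (fun x => (1 - t) • x + t • T x) ≤ volume.restrict (box d L) := by
  rcases eq_or_ne t 0 with h0 | h0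
  · subst h0
    simpa using dens_le h.h₀range h.h₀box
  rcases eq_or_ne t 1 with h1 | h1
  · subst h1
    have := dens_le h.h₁range h.h₁box
    rw [← h.map_dens] at this
    simpa using this
  have ht' : t ∈ Ioo (0:ℝ) 1 := ⟨lt_of_le_of_ne ht.1 (Ne.symm h0), lt_of_le_of_ne ht.2 h1⟩
  have : (dens ρ₀).map (fun x => (1 - t) • x + t • T x) =
      ((dens ρ₀).map (fun x => (1 - t) • x + t • T x)).restrict (box d L) := by
    symm
    apply Measure.restrict_eq_self_of_ae_mem
    refine (ae_map_iff (h.measTt t).aemeasurable (box_measurable L)).2 ?_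
    filter_upwards [h.ae_interp_box] with x hx using hx t ht
  rw [this]
  exact Measure.restrict_mono le_rfl (h.interp_le_vol ht')

theorem Setup.exists_c (h : Setup L ρ₀ ρ₁ ψ T) :
    ∃ c : EuclideanSpace ℝ (Fin d) → ℝ → ℝ,
      Measurable (fun q : EuclideanSpace ℝ (Fin d) × ℝ => c q.1 q.2) ∧
      (∀ x t, c x t ∈ Icc (0:ℝ) 1) ∧
      ∀ t ∈ Icc (0:ℝ) 1,
        (volume.restrict (box d L)).withDensity (fun x => ENNReal.ofReal (c x t)) =
          (dens ρ₀).map (fun x => (1 - t) • x + t • T x) := by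
  have := h.fin₀
  have hT := h.hT
  have hm : Measurable (fun q : ℝ × EuclideanSpace ℝ (Fin d) => (1 - q.1) • q.2 + q.1 • T q.2) := by
    fun_prop
  let κ : ProbabilityTheory.Kernel ℝ (EuclideanSpace ℝ (Fin d)) :=
    ((ProbabilityTheory.Kernel.id).prod (ProbabilityTheory.Kernel.const ℝ (dens ρ₀))).map
      (fun q : ℝ × EuclideanSpace ℝ (Fin d) => (1 - q.1) • q.2 + q.1 • T q.2)
  let η : ProbabilityTheory.Kernel ℝ (EuclideanSpace ℝ (Fin d)) :=
    ProbabilityTheory.Kernel.const ℝ (volume.restrict (box d L))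
  have hκ : ∀ t, κ t = (dens ρ₀).map (fun x => (1 - t) • x + t • T x) := by
    intro t
    simp only [κ]
    rw [ProbabilityTheory.Kernel.map_apply _ hm, ProbabilityTheory.Kernel.prod_apply,
      ProbabilityTheory.Kernel.id_apply, ProbabilityTheory.Kernel.const_apply,
      Measure.dirac_prod, Measure.map_map hm (by fun_prop)]
    rfl
  have hη : ∀ t, η t = volume.restrict (box d L) := fun t => rfl
  refine ⟨fun x t => min 1 (ProbabilityTheory.Kernel.rnDeriv κ η t x).toReal, ?_, ?_, ?_⟩
  · have := (ProbabilityTheory.Kernel.measurable_rnDeriv κ η).ennreal_toReal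
    exact measurable_const.min (this.comp measurable_swap)
  · intro x t
    exact ⟨le_min zero_le_one ENNReal.toReal_nonneg, min_le_left _ _⟩
  · intro t ht
    have hle := h.interp_le ht
    rw [← hκ] at hle ⊢
    have : IsFiniteMeasure (κ t) := isFiniteMeasure_of_le _ hle
    rw [← hη t] at hle ⊢
    have hac := Measure.absolutelyContinuous_of_le hle
    rw [← Measure.withDensity_rnDeriv_eq _ _ hac]
    apply withDensity_congr_ae
    filter_upwards [ProbabilityTheory.Kernel.rnDeriv_eq_rnDeriv_measure (κ := κ) (η := η) (a := t),
      Measure.rnDeriv_le_one_of_le hle] with x h1 h2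
    rw [h1]
    have h2' : (κ t).rnDeriv (η t) x ≤ 1 := h2
    have h3 : ((κ t).rnDeriv (η t) x).toReal ≤ 1 := by
      have := ENNReal.toReal_mono ENNReal.one_ne_top h2'
      simpa using this
    rw [min_eq_right h3, ENNReal.ofReal_toReal (ne_top_of_le_ne_top ENNReal.one_ne_top h2')]

theorem Setup.exists_v (h : Setup L ρ₀ ρ₁ ψ T) :
    ∃ v : EuclideanSpace ℝ (Fin d) → ℝ → EuclideanSpace ℝ (Fin d),
      Measurable (fun q : EuclideanSpace ℝ (Fin d) × ℝ => v q.1 q.2) ∧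
      ∀ t ∈ Ioo (0:ℝ) 1, ∀ x, HasGradientAt ψ (T x) x → v ((1 - t) • x + t • T x) t = T x - x := by
  classical
  refine ⟨fun x t => (univ ×ˢ Ioo (0:ℝ) 1).piecewise
    (fun q : EuclideanSpace ℝ (Fin d) × ℝ => q.2⁻¹ • (q.1 - St ψ q.2 q.1)) (fun _ => 0) (x, t), ?_, ?_⟩
  · refine ContinuousOn.measurable_piecewise ?_ continuousOn_const
      (MeasurableSet.univ.prod measurableSet_Ioo)
    have hs : ContinuousOn (fun q : EuclideanSpace ℝ (Fin d) × ℝ => q.2⁻¹)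
        (univ ×ˢ Ioo (0:ℝ) 1) :=
      continuousOn_snd.inv₀ (fun q hq => hq.2.1.ne')
    exact hs.smul (continuousOn_fst.sub (St_contOn h.hψ))
  · intro t ht x hx
    simp only
    rw [piecewise_eq_of_mem _ _ _ (show ((1 - t) • x + t • T x, t) ∈ univ ×ˢ Ioo (0:ℝ) 1 from ⟨mem_univ _, ht⟩)]
    simp only
    rw [St_interp h.hψ ht hx]
    have e : (1 - t) • x + t • T x - x = t • (T x - x) := by
      rw [sub_smul, smul_sub, one_smul]; abel
    rw [e, smul_smul, inv_mul_cancel₀ ht.1.ne', one_smul]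

end exist

section exist2
variable {d : ℕ} {L : ℝ} {ρ₀ ρ₁ : EuclideanSpace ℝ (Fin d) → ℝ}
    {ψ : EuclideanSpace ℝ (Fin d) → ℝ}
    {T : EuclideanSpace ℝ (Fin d) → EuclideanSpace ℝ (Fin d)}
    {c : EuclideanSpace ℝ (Fin d) → ℝ → ℝ}
    {v : EuclideanSpace ℝ (Fin d) → ℝ → EuclideanSpace ℝ (Fin d)}

theorem Setup.action_eq (h : Setup L ρ₀ ρ₁ ψ T)
    (hc : Measurable (fun q : EuclideanSpace ℝ (Fin d) × ℝ => c q.1 q.2))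
    (hc1 : ∀ x t, c x t ∈ Icc (0:ℝ) 1)
    (hc2 : ∀ t ∈ Icc (0:ℝ) 1,
        (volume.restrict (box d L)).withDensity (fun x => ENNReal.ofReal (c x t)) =
          (dens ρ₀).map (fun x => (1 - t) • x + t • T x))
    (hv : Measurable (fun q : EuclideanSpace ℝ (Fin d) × ℝ => v q.1 q.2))
    (hv1 : ∀ t ∈ Ioo (0:ℝ) 1, ∀ x, HasGradientAt ψ (T x) x →
      v ((1 - t) • x + t • T x) t = T x - x) :
    ∫⁻ t in Icc (0:ℝ) 1, ∫⁻ x in box d L, ENNReal.ofReal (c x t * ‖v x t‖ ^ 2) =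
      ENNReal.ofReal (∫ x, ‖T x - x‖ ^ 2 ∂(dens ρ₀)) := by
  rw [Measure.restrict_congr_set (Ioo_ae_eq_Icc (a := (0:ℝ)) (b := 1)).symm]
  have : ∀ t ∈ Ioo (0:ℝ) 1, ∫⁻ x in box d L, ENNReal.ofReal (c x t * ‖v x t‖ ^ 2) =
      ENNReal.ofReal (∫ x, ‖T x - x‖ ^ 2 ∂(dens ρ₀)) := by
    intro t ht
    have mc : Measurable (fun x => c x t) := hc.comp measurable_prodMk_right
    have mv : Measurable (fun x => v x t) := hv.comp measurable_prodMk_right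
    have e : ∀ x, ENNReal.ofReal (c x t * ‖v x t‖ ^ 2) =
        ((fun x => ENNReal.ofReal (c x t)) * (fun x => ENNReal.ofReal (‖v x t‖ ^ 2))) x := by
      intro x
      rw [ENNReal.ofReal_mul (hc1 x t).1]; rfl
    simp_rw [e]
    rw [← lintegral_withDensity_eq_lintegral_mul _ mc.ennreal_ofReal
      (mv.norm.pow_const 2).ennreal_ofReal, hc2 t ⟨ht.1.le, ht.2.le⟩,
      lintegral_map (mv.norm.pow_const 2).ennreal_ofReal (h.measTt t), ← h.I_eq]
    apply lintegral_congr_ae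
    filter_upwards [h.ae_grad] with x hx
    rw [hv1 t ht x hx, norm_sub_rev]
  rw [setLIntegral_congr_fun measurableSet_Ioo this]
  simp

theorem Setup.inner_eq (h : Setup L ρ₀ ρ₁ ψ T)
    (hc : Measurable (fun q : EuclideanSpace ℝ (Fin d) × ℝ => c q.1 q.2))
    (hc1 : ∀ x t, c x t ∈ Icc (0:ℝ) 1)
    (hc2 : ∀ t ∈ Icc (0:ℝ) 1,
        (volume.restrict (box d L)).withDensity (fun x => ENNReal.ofReal (c x t)) =
          (dens ρ₀).map (fun x => (1 - t) • x + t • T x)) {t : ℝ} (ht : t ∈ Icc (0:ℝ) 1)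
    {g : EuclideanSpace ℝ (Fin d) → ℝ} (hg : Measurable g) :
    ∫ x in box d L, c x t * g x = ∫ x, g ((1 - t) • x + t • T x) ∂(dens ρ₀) := by
  have mc : Measurable (fun x => c x t) := hc.comp measurable_prodMk_right
  rw [← integral_map (h.measTt t).aemeasurable hg.aestronglyMeasurable, ← hc2 t ht,
    integral_withDensity_eq_integral_toReal_smul mc.ennreal_ofReal (by simp)]
  congr 1
  ext x
  rw [ENNReal.toReal_ofReal (hc1 x t).1, smul_eq_mul]

theorem Setup.weak_eq (h : Setup L ρ₀ ρ₁ ψ T)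
    (hc : Measurable (fun q : EuclideanSpace ℝ (Fin d) × ℝ => c q.1 q.2))
    (hc1 : ∀ x t, c x t ∈ Icc (0:ℝ) 1)
    (hc2 : ∀ t ∈ Icc (0:ℝ) 1,
        (volume.restrict (box d L)).withDensity (fun x => ENNReal.ofReal (c x t)) =
          (dens ρ₀).map (fun x => (1 - t) • x + t • T x))
    (hv : Measurable (fun q : EuclideanSpace ℝ (Fin d) × ℝ => v q.1 q.2))
    (hv1 : ∀ t ∈ Ioo (0:ℝ) 1, ∀ x, HasGradientAt ψ (T x) x →
      v ((1 - t) • x + t • T x) t = T x - x)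
    {φ : EuclideanSpace ℝ (Fin d) → ℝ → ℝ}
    (hφ : ContDiff ℝ 1 (fun z : EuclideanSpace ℝ (Fin d) × ℝ => φ z.1 z.2)) :
    (∫ t in Icc (0:ℝ) 1, ∫ x in box d L, c x t *
        (deriv (fun s => φ x s) t + ⟪v x t, gradient (fun y => φ y t) x⟫)) =
      (∫ x in box d L, ρ₁ x * φ x 1) - (∫ x in box d L, ρ₀ x * φ x 0) := by
  have := h.fin₀
  have hT := h.hT
  let F : ℝ → EuclideanSpace ℝ (Fin d) → ℝ := fun t x =>
    deriv (fun s => φ ((1 - t) • x + t • T x) s) t +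
      ⟪T x - x, gradient (fun y => φ y t) ((1 - t) • x + t • T x)⟫
  have e1 : (∫ t in Icc (0:ℝ) 1, ∫ x in box d L, c x t *
        (deriv (fun s => φ x s) t + ⟪v x t, gradient (fun y => φ y t) x⟫)) =
      ∫ t in Icc (0:ℝ) 1, ∫ x, F t x ∂(dens ρ₀) := by
    rw [Measure.restrict_congr_set (Ioo_ae_eq_Icc (a := (0:ℝ)) (b := 1)).symm]
    apply setIntegral_congr_fun measurableSet_Ioo
    intro t ht
    have m1 : Measurable (fun x => deriv (fun s => φ x s) t) :=
      (c1_deriv_cont hφ).measurable.comp measurable_prodMk_right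
    have m2 : Measurable (fun x => gradient (fun y => φ y t) x) :=
      (c1_gradient_cont hφ).measurable.comp measurable_prodMk_right
    have mv : Measurable (fun x => v x t) := hv.comp measurable_prodMk_right
    have := h.inner_eq hc hc1 hc2 ⟨ht.1.le, ht.2.le⟩ (g := fun x =>
      deriv (fun s => φ x s) t + ⟪v x t, gradient (fun y => φ y t) x⟫) (m1.add (mv.inner m2))
    simp only
    rw [this]
    apply integral_congr_ae
    filter_upwards [h.ae_grad] with x hx
    simp only [F]
    rw [hv1 t ht x hx]
  have mz : Measurable (fun q : ℝ × EuclideanSpace ℝ (Fin d) =>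
      ((1 - q.1) • q.2 + q.1 • T q.2, q.1)) := by fun_prop
  have mF : Measurable (Function.uncurry F) := by
    have m1 := (c1_deriv_cont hφ).measurable.comp mz
    have m2 := (c1_gradient_cont hφ).measurable.comp mz
    have m3 : Measurable (fun q : ℝ × EuclideanSpace ℝ (Fin d) => T q.2 - q.2) := by fun_prop
    exact m1.add (m3.inner m2)
  obtain ⟨M1, hM1⟩ := bdd_on_ball (c1_deriv_cont hφ) L
  obtain ⟨M2, hM2⟩ := bdd_on_ball (c1_gradient_cont hφ) L
  have iF : Integrable (Function.uncurry F) ((volume.restrict (Icc (0:ℝ) 1)).prod (dens ρ₀)) := by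
    refine Integrable.mono' (integrable_const (M1 + (Real.sqrt d * L + Real.sqrt d * L) * M2))
      mF.aestronglyMeasurable ?_
    have a1 : ∀ᵐ q ∂((volume.restrict (Icc (0:ℝ) 1)).prod (dens ρ₀)), q.1 ∈ Icc (0:ℝ) 1 :=
      Measure.quasiMeasurePreserving_fst.ae (ae_restrict_mem measurableSet_Icc)
    have a2 : ∀ᵐ q ∂((volume.restrict (Icc (0:ℝ) 1)).prod (dens ρ₀)), q.2 ∈ box d L ∧ T q.2 ∈ box d L :=
      Measure.quasiMeasurePreserving_snd.ae (h.ae_box₀.and h.ae_boxT)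
    filter_upwards [a1, a2] with q ht hx
    have hb : (1 - q.1) • q.2 + q.1 • T q.2 ∈ box d L :=
      box_convex L hx.1 hx.2 (by linarith [ht.2]) ht.1 (by ring)
    have b1 := hM1 _ hb _ ht
    have b2 := hM2 _ hb _ ht
    refine (norm_add_le _ _).trans (add_le_add b1 ?_)
    refine (norm_inner_le_norm _ _).trans ?_
    have b3 : ‖T q.2 - q.2‖ ≤ Real.sqrt d * L + Real.sqrt d * L :=
      (norm_sub_le _ _).trans (add_le_add (box_norm hx.2) (box_norm hx.1))
    exact mul_le_mul b3 b2 (norm_nonneg _) ((norm_nonneg _).trans b3)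
  rw [e1, integral_integral_swap iF]
  have c1 : Continuous (fun x => φ x 1) :=
    hφ.continuous.comp (continuous_id.prodMk continuous_const)
  have c0 : Continuous (fun x => φ x 0) :=
    hφ.continuous.comp (continuous_id.prodMk continuous_const)
  rw [h.integral_T c1, integral_dens h.h₀meas h.h₀range h.h₀box,
    ← integral_sub (h.intT c1) (h.int0 c0)]
  congr 1
  ext x
  rw [integral_Icc_eq_integral_Ioc, ← intervalIntegral.integral_of_le zero_le_one]
  have hcz : Continuous (fun t : ℝ => ((1 - t) • x + t • T x, t)) := by fun_prop
  have hd : ∀ t ∈ uIcc (0:ℝ) 1, HasDerivAt (fun t => φ ((1 - t) • x + t • T x) t) (F t x) t := by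
    intro t _
    have hγ : HasDerivAt (fun t : ℝ => (1 - t) • x + t • T x) (T x - x) t := by
      have h1 : HasDerivAt (fun t : ℝ => (1 - t) • x) ((-1 : ℝ) • x) t :=
        ((hasDerivAt_id t).const_sub 1).smul_const x
      have h2 : HasDerivAt (fun t : ℝ => t • T x) ((1 : ℝ) • T x) t :=
        (hasDerivAt_id t).smul_const (T x)
      refine (h1.add h2).congr_deriv ?_
      rw [neg_smul, one_smul, one_smul]; abel
    exact c1_curve hφ hγ
  rw [intervalIntegral.integral_eq_sub_of_hasDerivAt hd]
  · simp
  · apply Continuous.intervalIntegrable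
    have k1 := (c1_deriv_cont hφ).comp hcz
    have k2 := (c1_gradient_cont hφ).comp hcz
    exact k1.add (continuous_const.inner k2)

theorem half_action (c : EuclideanSpace ℝ (Fin d) → ℝ → ℝ)
    (v : EuclideanSpace ℝ (Fin d) → ℝ → EuclideanSpace ℝ (Fin d)) :
    (∫⁻ t in Icc (0:ℝ) 1, ∫⁻ x in box d L, ENNReal.ofReal ((1/2) * (c x t * ‖v x t‖ ^ 2))) =
      2⁻¹ * ∫⁻ t in Icc (0:ℝ) 1, ∫⁻ x in box d L, ENNReal.ofReal (c x t * ‖v x t‖ ^ 2) := by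
  have e : ∀ r : ℝ, ENNReal.ofReal ((1/2) * r) = 2⁻¹ * ENNReal.ofReal r := by
    intro r
    rw [ENNReal.ofReal_mul (by norm_num)]
    congr 1
    rw [one_div, ENNReal.ofReal_inv_of_pos (by norm_num)]
    simp
  simp_rw [e]
  rw [← lintegral_const_mul' _ _ (by simp)]
  congr 1
  ext t
  rw [lintegral_const_mul' _ _ (by simp)]

theorem Setup.exist (h : Setup L ρ₀ ρ₁ ψ T) : ∃ c v, RelaxedAdmissible L ρ₀ ρ₁ c v ∧
      (∫⁻ t in Icc (0:ℝ) 1, ∫⁻ x in box d L,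
          ENNReal.ofReal ((1/2) * (c x t * ‖v x t‖ ^ 2))) =
        2⁻¹ * W2sq (dens ρ₀) (dens ρ₁) ∧
      ∀ t ∈ Icc (0:ℝ) 1,
        (volume.restrict (box d L)).withDensity (fun x => ENNReal.ofReal (c x t)) =
          (dens ρ₀).map (fun x => (1 - t) • x + t • T x) := by
  obtain ⟨c, hc, hc1, hc2⟩ := h.exists_c
  obtain ⟨v, hv, hv1⟩ := h.exists_v
  have hact := h.action_eq hc hc1 hc2 hv hv1
  refine ⟨c, v, ⟨hc, hv, fun x _ t _ => hc1 x t, ?_, fun φ hφ => h.weak_eq hc hc1 hc2 hv hv1 hφ⟩,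
    ?_, hc2⟩
  · rw [hact]; exact ENNReal.ofReal_lt_top
  · rw [half_action, hact, W2sq_eq h]

theorem Setup.lower (h : Setup L ρ₀ ρ₁ ψ T) (ha : RelaxedAdmissible L ρ₀ ρ₁ c v) :
    2⁻¹ * W2sq (dens ρ₀) (dens ρ₁) ≤ (∫⁻ t in Icc (0:ℝ) 1, ∫⁻ x in box d L,
          ENNReal.ofReal ((1/2) * (c x t * ‖v x t‖ ^ 2))) := by
  rw [adm_action ha, W2sq_eq h]
  refine le_trans (le_of_eq ?_) (ENNReal.ofReal_le_ofReal (lower_main h ha))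
  rw [ENNReal.ofReal_mul (by norm_num)]
  congr 1
  rw [one_div, ENNReal.ofReal_inv_of_pos (by norm_num)]
  simp

end exist2

section uniq
open Filter Topology
variable {d : ℕ} {L : ℝ} {ρ₀ ρ₁ : EuclideanSpace ℝ (Fin d) → ℝ}
  {ψ : EuclideanSpace ℝ (Fin d) → ℝ} {T : EuclideanSpace ℝ (Fin d) → EuclideanSpace ℝ (Fin d)}
  {c : EuclideanSpace ℝ (Fin d) → ℝ → ℝ}
  {v : EuclideanSpace ℝ (Fin d) → ℝ → EuclideanSpace ℝ (Fin d)}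

theorem GoodEta.neg' {η : EuclideanSpace ℝ (Fin d) → ℝ} {C : ℝ} (h : GoodEta η C) :
    GoodEta (fun z => -η z) C where
  bdd := fun z => by rw [abs_neg]; exact h.bdd z
  nonneg := h.nonneg
  lip := fun z w => by
    have e : -η z - -η w = -(η z - η w) := by ring
    rw [e, abs_neg]; exact h.lip z w
  conv := fun k => by
    have := h.conv (-k)
    rw [abs_neg] at this
    have e : (fun z => k * -η z + |k| * C / 2 * ‖z‖ ^ 2) =
      fun z => -k * η z + |k| * C / 2 * ‖z‖ ^ 2 := by ext z; ring
    rw [e]; exact this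

theorem aesm_stm {F : Type*} [NormedAddCommGroup F] [SecondCountableTopology F]
    {f : ℝ × EuclideanSpace ℝ (Fin d) → F}
    (hf : ContinuousOn f (Ioo (0:ℝ) 1 ×ˢ univ)) : AEStronglyMeasurable f (stm d L) := by
  have h : stm d L = (volume.prod volume).restrict (Ioo (0:ℝ) 1 ×ˢ box d L) := by
    rw [stm, ← Measure.prod_restrict, Measure.restrict_congr_set Ioo_ae_eq_Icc]
  rw [h]
  exact (hf.mono (prod_mono_right (subset_univ _))).aestronglyMeasurable
    (measurableSet_Ioo.prod (box_measurable L))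

theorem exists_theta {g : ℝ → ℝ} (hg : Continuous g) (hgc : HasCompactSupport g)
    (hgs : tsupport g ⊆ Ioo (0:ℝ) 1) : ∃ (θ : ℝ → ℝ) (κ M : ℝ), ContDiff ℝ 1 θ ∧
      deriv θ = g ∧ 0 < κ ∧ κ ≤ 1 ∧ (∀ t, 1 - κ < t → θ t = 0) ∧ 0 ≤ M ∧ (∀ t, |θ t| ≤ M) ∧
      θ 0 = -∫ t, g t := by
  have hd : ∀ t, HasDerivAt (fun t => ∫ s in (1:ℝ)..t, g s) (g t) t := fun t =>
    (hg.integral_hasStrictDerivAt 1 t).hasDerivAt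
  have hder : deriv (fun t => ∫ s in (1:ℝ)..t, g s) = g := funext fun t => (hd t).deriv
  have hgi : Integrable g := hg.integrable_of_hasCompactSupport hgc
  obtain ⟨κ, hκ, hκ1, hκ2⟩ : ∃ κ : ℝ, 0 < κ ∧ κ ≤ 1 ∧ ∀ t, 1 - κ < t → g t = 0 := by
    rcases (tsupport g).eq_empty_or_nonempty with h0 | hne
    · refine ⟨1, one_pos, le_rfl, fun t _ => ?_⟩
      by_contra hh
      have : t ∈ tsupport g := subset_tsupport _ hh
      rw [h0] at this; exact this
    · obtain ⟨m, hm, hmax⟩ := IsCompact.exists_isGreatest hgc hne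
      have := hgs hm
      refine ⟨1 - m, by linarith [this.2], by linarith [this.1], fun t ht => ?_⟩
      by_contra hh
      have h1 : t ∈ tsupport g := subset_tsupport _ hh
      have := hmax h1
      linarith
  refine ⟨_, κ, ∫ t, ‖g t‖, contDiff_one_iff_deriv.2 ⟨fun t => (hd t).differentiableAt, by
    rw [hder]; exact hg⟩, hder, hκ, hκ1, ?_, integral_nonneg (fun _ => norm_nonneg _), ?_, ?_⟩
  · intro t ht
    have e : ∫ s in (1:ℝ)..t, g s = ∫ s in (1:ℝ)..t, (0:ℝ) := by
      apply intervalIntegral.integral_congr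
      intro s hs
      apply hκ2
      rcases le_total 1 t with h | h
      · rw [uIcc_of_le h] at hs; linarith [hs.1]
      · rw [uIcc_of_ge h] at hs; linarith [hs.1]
    simp only [e]; simp
  · intro t
    refine (intervalIntegral.norm_integral_le_integral_norm_uIoc (f := g) (a := 1) (b := t)
      (μ := volume)).trans ?_
    exact setIntegral_le_integral hgi.norm (Eventually.of_forall fun _ => norm_nonneg _)
  · show ∫ s in (1:ℝ)..0, g s = _
    rw [intervalIntegral.integral_symm, intervalIntegral.integral_eq_integral_of_support_subset]
    exact (subset_tsupport g).trans (hgs.trans Ioo_subset_Ioc_self)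

theorem first_var (h : Setup L ρ₀ ρ₁ ψ T) (ha : RelaxedAdmissible L ρ₀ ρ₁ c v)
    (hK : (∫ q, (1/2) * (c q.2 q.1 * ‖v q.2 q.1‖ ^ 2) ∂(stm d L)) =
      (1/2) * ∫ x, ‖T x - x‖ ^ 2 ∂(dens ρ₀))
    {η : EuclideanSpace ℝ (Fin d) → ℝ} {C : ℝ} (hη : GoodEta η C)
    {g : ℝ → ℝ} (hg : Continuous g) (hgc : HasCompactSupport g)
    (hgs : tsupport g ⊆ Ioo (0:ℝ) 1) :
    (∫ t, g t) * (∫ x, η x ∂(dens ρ₀)) ≤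
      ∫ q, c q.2 q.1 * (g q.1 * η (St ψ q.1 q.2)) ∂(stm d L) := by
  obtain ⟨θ, κ, M, hθ, hθg, hκ, hκ1, hθ0, hM, hθM, hθ00⟩ := exists_theta hg hgc hgs
  obtain ⟨G, hG⟩ := hg.bounded_above_of_compact_support hgc
  have hC := hη.nonneg
  set I := ∫ x, ‖T x - x‖ ^ 2 ∂(dens ρ₀) with hI
  set J := ∫ x, η x ∂(dens ρ₀) with hJ
  let P : ℝ → ℝ × EuclideanSpace ℝ (Fin d) → EuclideanSpace ℝ (Fin d) × ℝ × ℝ := fun s q =>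
    ((s ^ 2 + (1 - 2 * s ^ 2) * q.1)⁻¹ • q.2, (s ^ 2 + (1 - 2 * s ^ 2) * q.1)⁻¹ - 1, s * θ q.1)
  let F : ℝ → ℝ × EuclideanSpace ℝ (Fin d) → ℝ := fun s q =>
    c q.2 q.1 * (g q.1 * η (Smax ψ η (P s q)))
  have small : ∀ᶠ s in 𝓝[>] (0:ℝ), 0 < s ∧ s ^ 2 < 1/2 ∧ s ^ 2 ≤ κ / 2 ∧ s * M * C < κ / 2 := by
    have t1 : Tendsto (fun s : ℝ => s ^ 2) (𝓝[>] 0) (𝓝 0) := by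
      have : Continuous (fun s : ℝ => s ^ 2) := by fun_prop
      simpa using (this.tendsto 0).mono_left nhdsWithin_le_nhds
    have t2 : Tendsto (fun s : ℝ => s * M * C) (𝓝[>] 0) (𝓝 0) := by
      have : Continuous (fun s : ℝ => s * M * C) := by fun_prop
      simpa using (this.tendsto 0).mono_left nhdsWithin_le_nhds
    filter_upwards [self_mem_nhdsWithin, t1.eventually_lt_const (show (0:ℝ) < 1/2 by norm_num),
      t1.eventually_lt_const (show (0:ℝ) < κ/2 by linarith),
      t2.eventually_lt_const (show (0:ℝ) < κ/2 by linarith)] with s h1 h2 h3 h4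
    exact ⟨h1, h2, h3.le, h4⟩
  have hkC : ∀ s, 0 < s → s * M * C < κ / 2 → ∀ t, |s * θ t| * C < κ / 2 := by
    intro s hs h4 t
    rw [abs_mul, abs_of_pos hs]
    refine lt_of_le_of_lt ?_ h4
    exact mul_le_mul_of_nonneg_right (mul_le_mul_of_nonneg_left (hθM t) hs.le) hC
  have key : ∀ᶠ s in 𝓝[>] (0:ℝ), (∫ t, g t) * J ≤ s / (1 - 2 * s ^ 2) * I + ∫ q, F s q ∂(stm d L) := by
    filter_upwards [small] with s ⟨h1, h2, h3, h4⟩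
    have hp := propL h ha hη (ε := s ^ 2) (by positivity) h2 hκ hκ1 h3
      (k := fun t => s * θ t) (contDiff_const.mul hθ)
      (fun t ht => by simp [hθ0 t ht]) (hkC s h1 h4)
    have e : ∀ t, deriv (fun t => s * θ t) t = s * g t := by
      intro t
      rw [← hθg]
      exact deriv_const_mul _ ((hθ.differentiable (by norm_num)) t)
    have e2 : ∫ q, c q.2 q.1 * (deriv (fun t => s * θ t) q.1 *
        η (Smax ψ η ((s ^ 2 + (1 - 2 * s ^ 2) * q.1)⁻¹ • q.2,
          (s ^ 2 + (1 - 2 * s ^ 2) * q.1)⁻¹ - 1, s * θ q.1))) ∂(stm d L) =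
        s * ∫ q, F s q ∂(stm d L) := by
      rw [← integral_const_mul]
      congr 1
      ext q
      rw [e]
      simp only [F, P]
      ring
    rw [e2, hK, hθ00] at hp
    have hA : 0 < 1 - 2 * s ^ 2 := by linarith
    have h5 : (1 - 2 * s ^ 2) * s * ((∫ t, g t) * J - ∫ q, F s q ∂(stm d L)) ≤ s ^ 2 * I := by
      nlinarith [hp]
    rw [div_mul_eq_mul_div, ← sub_le_iff_le_add, le_div_iff₀ hA]
    have h6 : s * (((∫ t, g t) * J - ∫ q, F s q ∂(stm d L)) * (1 - 2 * s ^ 2)) ≤ s * (s * I) := by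
      nlinarith [h5]
    exact le_of_mul_le_mul_left h6 h1
  have hden : ∀ s, s ^ 2 < 1/2 → ∀ t ∈ Ioo (0:ℝ) 1, 0 < s ^ 2 + (1 - 2 * s ^ 2) * t := by
    intro s hs t ht
    have := ht.1
    have : 0 < (1 - 2 * s ^ 2) * t := mul_pos (by linarith) ht.1
    positivity
  have hPc : ∀ q : ℝ × EuclideanSpace ℝ (Fin d), q.1 ∈ Ioo (0:ℝ) 1 → ∀ s, s ^ 2 < 1/2 →
      ContinuousAt (fun z : ℝ × (ℝ × EuclideanSpace ℝ (Fin d)) => P z.1 z.2) (s, q) := by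
    intro q hq s hs
    have h1 : ContinuousAt (fun z : ℝ × (ℝ × EuclideanSpace ℝ (Fin d)) =>
        (z.1 ^ 2 + (1 - 2 * z.1 ^ 2) * z.2.1)⁻¹) (s, q) := by
      refine ContinuousAt.inv₀ (by fun_prop) (hden s hs _ hq).ne'
    have hθc := hθ.continuous
    have h2 : ContinuousAt (fun z : ℝ × (ℝ × EuclideanSpace ℝ (Fin d)) => z.1 * θ z.2.1) (s, q) := by
      fun_prop
    exact (h1.smul (by fun_prop)).prodMk ((h1.sub continuousAt_const).prodMk h2)
  have hP0 : ∀ q : ℝ × EuclideanSpace ℝ (Fin d), P 0 q = (q.1⁻¹ • q.2, q.1⁻¹ - 1, 0) := by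
    intro q; simp [P]
  have lim : Tendsto (fun s => ∫ q, F s q ∂(stm d L)) (𝓝[>] 0)
      (𝓝 (∫ q, c q.2 q.1 * (g q.1 * η (St ψ q.1 q.2)) ∂(stm d L))) := by
    apply tendsto_integral_filter_of_dominated_convergence (fun _ => G)
    · filter_upwards [small] with s ⟨h1, h2, h3, h4⟩
      refine (adm_meas_c ha).aestronglyMeasurable.mul (aesm_stm ?_)
      intro q hq
      have hq1 : q.1 ∈ Ioo (0:ℝ) 1 := hq.1
      refine ContinuousAt.continuousWithinAt ?_
      refine (ContinuousAt.comp (f := Prod.fst) (g := g) hg.continuousAt continuousAt_fst).mul ?_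
      refine ContinuousAt.comp (f := fun q => Smax ψ η (P s q)) (g := η) hη.continuous.continuousAt ?_
      refine ContinuousAt.comp (f := fun q => P s q) (g := Smax ψ η) ?_ ?_
      · refine Smax_continuousAt h.hψ hη ?_
        obtain ⟨α, hα, hα1, hα2, hα3⟩ := exists_alpha (ε := s ^ 2) (by positivity) h2 hκ hκ1 h3
        show |s * θ q.1| * C < (s ^ 2 + (1 - 2 * s ^ 2) * q.1)⁻¹ - 1
        rw [← hα1 q.1 ⟨hq1.1.le, hq1.2.le⟩]
        rcases le_or_gt q.1 (1 - κ) with h5 | h5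
        · exact (hkC s h1 h4 _).trans_le (hα3 _ h5)
        · rw [hθ0 _ h5]; simpa using hα2 q.1
      · exact ContinuousAt.comp (f := fun q => (s, q))
          (g := fun z : ℝ × (ℝ × EuclideanSpace ℝ (Fin d)) => P z.1 z.2) (hPc q hq1 s h2)
          (by fun_prop)
    · refine Eventually.of_forall fun s => ?_
      filter_upwards [adm_range ha] with q hq
      simp only [F]
      rw [norm_mul, norm_mul, Real.norm_eq_abs, abs_of_nonneg hq.1]
      have b1 := hG q.1
      have b2 : ‖η (Smax ψ η (P s q))‖ ≤ 1 := hη.bdd _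
      have b3 := mul_le_mul b1 b2 (norm_nonneg _) ((norm_nonneg _).trans b1)
      rw [mul_one] at b3
      have b4 := mul_le_mul hq.2 b3 (by positivity) zero_le_one
      rwa [one_mul] at b4
    · exact integrable_const _
    · filter_upwards [stm_ae_mem L] with q hq
      refine Tendsto.const_mul _ (Tendsto.const_mul _ ?_)
      have hmem : P 0 q ∈ Udom (EuclideanSpace ℝ (Fin d)) C := by
        rw [hP0]; simpa [Udom] using tinv_pos hq.2
      have e : St ψ q.1 q.2 = Smax ψ η (P 0 q) := by
        rw [hP0, St]; exact Smax_zero_eq _ _ _ _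
      rw [e]
      have c1 : ContinuousAt (fun s => η (Smax ψ η (P s q))) 0 := by
        refine ContinuousAt.comp (f := fun s => Smax ψ η (P s q)) (g := η)
          hη.continuous.continuousAt ?_
        refine ContinuousAt.comp (f := fun s => P s q) (g := Smax ψ η)
          (Smax_continuousAt h.hψ hη hmem) ?_
        exact ContinuousAt.comp (f := fun s => (s, q))
          (g := fun z : ℝ × (ℝ × EuclideanSpace ℝ (Fin d)) => P z.1 z.2)
          (hPc q hq.2 0 (by norm_num)) (by fun_prop)
      exact c1.tendsto.mono_left nhdsWithin_le_nhds
  have lim2 : Tendsto (fun s : ℝ => s / (1 - 2 * s ^ 2) * I) (𝓝[>] 0) (𝓝 0) := by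
    have : ContinuousAt (fun s : ℝ => s / (1 - 2 * s ^ 2) * I) 0 := by
      refine ContinuousAt.mul (ContinuousAt.div continuousAt_id (by fun_prop) (by norm_num))
        continuousAt_const
    simpa using this.tendsto.mono_left nhdsWithin_le_nhds
  have := ge_of_tendsto (lim2.add lim) key
  simpa using this

theorem first_var_eq (h : Setup L ρ₀ ρ₁ ψ T) (ha : RelaxedAdmissible L ρ₀ ρ₁ c v)
    (hK : (∫ q, (1/2) * (c q.2 q.1 * ‖v q.2 q.1‖ ^ 2) ∂(stm d L)) =
      (1/2) * ∫ x, ‖T x - x‖ ^ 2 ∂(dens ρ₀))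
    {η : EuclideanSpace ℝ (Fin d) → ℝ} {C : ℝ} (hη : GoodEta η C)
    {g : ℝ → ℝ} (hg : Continuous g) (hgc : HasCompactSupport g)
    (hgs : tsupport g ⊆ Ioo (0:ℝ) 1) :
    (∫ t, g t) * (∫ x, η x ∂(dens ρ₀)) =
      ∫ q, c q.2 q.1 * (g q.1 * η (St ψ q.1 q.2)) ∂(stm d L) := by
  refine le_antisymm (first_var h ha hK hη hg hgc hgs) ?_
  have := first_var h ha hK hη.neg' hg hgc hgs
  simp only [mul_neg, integral_neg] at this
  linarith

end uniq

section uniq2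
open Filter Topology
variable {d : ℕ} {L : ℝ} {ρ₀ ρ₁ : EuclideanSpace ℝ (Fin d) → ℝ}
  {ψ : EuclideanSpace ℝ (Fin d) → ℝ} {T : EuclideanSpace ℝ (Fin d) → EuclideanSpace ℝ (Fin d)}
  {c : EuclideanSpace ℝ (Fin d) → ℝ → ℝ}
  {v : EuclideanSpace ℝ (Fin d) → ℝ → EuclideanSpace ℝ (Fin d)}

theorem slice_eq (h : Setup L ρ₀ ρ₁ ψ T) (ha : RelaxedAdmissible L ρ₀ ρ₁ c v)
    (hK : (∫ q, (1/2) * (c q.2 q.1 * ‖v q.2 q.1‖ ^ 2) ∂(stm d L)) =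
      (1/2) * ∫ x, ‖T x - x‖ ^ 2 ∂(dens ρ₀))
    {η : EuclideanSpace ℝ (Fin d) → ℝ} {C : ℝ} (hη : GoodEta η C) :
    ∀ᵐ t ∂(volume : Measure ℝ), t ∈ Ioo (0:ℝ) 1 →
      ∫ x in box d L, c x t * η (St ψ t x) = ∫ x, η x ∂(dens ρ₀) := by
  have hcont : ContinuousOn (fun q : ℝ × EuclideanSpace ℝ (Fin d) => η (St ψ q.1 q.2))
      (Ioo (0:ℝ) 1 ×ˢ univ) := by
    refine hη.continuous.comp_continuousOn ?_
    refine (St_contOn h.hψ).comp (f := Prod.swap) continuous_swap.continuousOn ?_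
    intro q hq
    exact ⟨hq.2, hq.1⟩
  have hm : AEStronglyMeasurable (fun q : ℝ × EuclideanSpace ℝ (Fin d) =>
      c q.2 q.1 * η (St ψ q.1 q.2)) (stm d L) :=
    (adm_meas_c ha).aestronglyMeasurable.mul (aesm_stm hcont)
  have hb : ∀ᵐ q ∂(stm d L), ‖c q.2 q.1 * η (St ψ q.1 q.2)‖ ≤ 1 := by
    filter_upwards [adm_range ha] with q hq
    rw [norm_mul, Real.norm_eq_abs, abs_of_nonneg hq.1]
    exact mul_le_one₀ hq.2 (norm_nonneg _) (hη.bdd _)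
  have hi : Integrable (fun q : ℝ × EuclideanSpace ℝ (Fin d) =>
      c q.2 q.1 * η (St ψ q.1 q.2)) (stm d L) := Integrable.of_bound hm 1 hb
  have hi1 : IntegrableOn (fun t => ∫ x in box d L, c x t * η (St ψ t x)) (Icc (0:ℝ) 1) :=
    Integrable.integral_prod_left
      (show Integrable _ ((volume.restrict (Icc (0:ℝ) 1)).prod (volume.restrict (box d L))) from hi)
  have hli : LocallyIntegrableOn (fun t => (∫ x in box d L, c x t * η (St ψ t x)) -
      ∫ x, η x ∂(dens ρ₀)) (Ioo (0:ℝ) 1) volume := by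
    have h2 : IntegrableOn (fun t => (∫ x in box d L, c x t * η (St ψ t x)) -
        ∫ x, η x ∂(dens ρ₀)) (Icc (0:ℝ) 1) := hi1.sub (integrable_const _)
    exact (h2.mono_set Ioo_subset_Icc_self).locallyIntegrableOn
  have := isOpen_Ioo.ae_eq_zero_of_integral_contDiff_smul_eq_zero hli ?_
  · filter_upwards [this] with t ht htm
    exact sub_eq_zero.1 (ht htm)
  · intro g hg hgc hgs
    have hgz : ∀ t, t ∉ Icc (0:ℝ) 1 → g t = 0 := by
      intro t ht
      by_contra hh
      exact ht (Ioo_subset_Icc_self (hgs (subset_tsupport _ hh)))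
    obtain ⟨G, hG⟩ := hg.continuous.bounded_above_of_compact_support hgc
    have hgi : Integrable g := hg.continuous.integrable_of_hasCompactSupport hgc
    have e1 := first_var_eq h ha hK hη hg.continuous hgc hgs
    have hi2 : Integrable (fun q : ℝ × EuclideanSpace ℝ (Fin d) =>
        c q.2 q.1 * (g q.1 * η (St ψ q.1 q.2))) (stm d L) := by
      have := hi.bdd_mul (c := G) (f := fun q => g q.1)
        (hg.continuous.comp continuous_fst).aestronglyMeasurable
        (Eventually.of_forall fun q => hG q.1)
      refine this.congr (Eventually.of_forall fun q => ?_)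
      simp only
      ring
    have e2 : ∫ q, c q.2 q.1 * (g q.1 * η (St ψ q.1 q.2)) ∂(stm d L) =
        ∫ t in Icc (0:ℝ) 1, g t * ∫ x in box d L, c x t * η (St ψ t x) := by
      rw [stm] at hi2 ⊢
      rw [integral_prod _ hi2]
      congr 1
      ext t
      rw [← integral_const_mul]
      congr 1
      ext x
      ring
    have i3 : IntegrableOn (fun t => g t * ∫ x in box d L, c x t * η (St ψ t x)) (Icc (0:ℝ) 1) :=
      hi1.bdd_mul (c := G) (f := g) hg.continuous.aestronglyMeasurable (Eventually.of_forall hG)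
    rw [← setIntegral_eq_integral_of_forall_compl_eq_zero (s := Icc (0:ℝ) 1)
      (fun t ht => by simp [hgz t ht])]
    simp only [smul_eq_mul, mul_sub]
    rw [integral_sub i3 (hgi.integrableOn.mul_const _), ← e2, ← e1, integral_mul_const,
      setIntegral_eq_integral_of_forall_compl_eq_zero hgz, sub_self]

theorem charFun_cos (μ : Measure (EuclideanSpace ℝ (Fin d))) [IsFiniteMeasure μ]
    (ξ : EuclideanSpace ℝ (Fin d)) : charFun μ ξ =
      ((∫ x, Real.cos (⟪ξ, x⟫ + 0) ∂μ : ℝ) : ℂ) +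
        ((∫ x, Real.cos (⟪ξ, x⟫ + -(Real.pi / 2)) ∂μ : ℝ) : ℂ) * Complex.I := by
  have hint : ∀ b : ℝ, Integrable (fun x => Real.cos (⟪ξ, x⟫ + b)) μ := by
    intro b
    refine Integrable.of_bound (Continuous.aestronglyMeasurable (by fun_prop)) 1
      (Eventually.of_forall fun x => Real.abs_cos_le_one _)
  rw [charFun_apply, ← integral_complex_ofReal, ← integral_complex_ofReal, ← integral_mul_const,
    ← integral_add (hint 0).ofReal ((hint _).ofReal.mul_const _)]
  congr 1
  ext x
  rw [Complex.exp_mul_I, add_zero, ← sub_eq_add_neg, Real.cos_sub_pi_div_two,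
    real_inner_comm, Complex.ofReal_cos, Complex.ofReal_sin]

theorem Setup.uniq (h : Setup L ρ₀ ρ₁ ψ T) (ha : RelaxedAdmissible L ρ₀ ρ₁ c v)
    (hact : (∫⁻ t in Icc (0:ℝ) 1, ∫⁻ x in box d L,
          ENNReal.ofReal ((1/2) * (c x t * ‖v x t‖ ^ 2))) =
        2⁻¹ * W2sq (dens ρ₀) (dens ρ₁)) :
    ∀ᵐ t ∂(volume.restrict (Icc (0:ℝ) 1)),
        (volume.restrict (box d L)).withDensity (fun x => ENNReal.ofReal (c x t)) =
          (dens ρ₀).map (fun x => (1 - t) • x + t • T x) := by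
  have hfin := h.fin₀
  have hK : (∫ q, (1/2) * (c q.2 q.1 * ‖v q.2 q.1‖ ^ 2) ∂(stm d L)) =
      (1/2) * ∫ x, ‖T x - x‖ ^ 2 ∂(dens ρ₀) := by
    rw [adm_action ha, W2sq_eq h] at hact
    have e : (2⁻¹ : ℝ≥0∞) = ENNReal.ofReal (1/2) := by
      rw [one_div, ENNReal.ofReal_inv_of_pos (by norm_num)]; simp
    rw [e, ← ENNReal.ofReal_mul (by norm_num)] at hact
    refine (ENNReal.ofReal_eq_ofReal_iff ?_ ?_).1 hact
    · refine integral_nonneg_of_ae ?_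
      filter_upwards [adm_range ha] with q hq
      have := hq.1
      simp only [Pi.zero_apply]
      positivity
    · exact mul_nonneg (by norm_num) (integral_nonneg fun _ => by positivity)
  have H : ∀ᵐ t ∂(volume : Measure ℝ), ∀ n : ℕ, t ∈ Ioo (0:ℝ) 1 →
      (∫ x in box d L, c x t *
        Real.cos (⟪TopologicalSpace.denseSeq (EuclideanSpace ℝ (Fin d)) n, St ψ t x⟫ + 0) =
      ∫ x, Real.cos (⟪TopologicalSpace.denseSeq (EuclideanSpace ℝ (Fin d)) n, x⟫ + 0) ∂(dens ρ₀)) ∧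
      (∫ x in box d L, c x t *
        Real.cos (⟪TopologicalSpace.denseSeq (EuclideanSpace ℝ (Fin d)) n, St ψ t x⟫
          + -(Real.pi / 2)) =
      ∫ x, Real.cos (⟪TopologicalSpace.denseSeq (EuclideanSpace ℝ (Fin d)) n, x⟫
          + -(Real.pi / 2)) ∂(dens ρ₀)) := by
    rw [ae_all_iff]
    intro n
    filter_upwards [slice_eq h ha hK (GoodEta.cos _ 0),
      slice_eq h ha hK (GoodEta.cos _ (-(Real.pi / 2)))] with t h1 h2 ht
    exact ⟨h1 ht, h2 ht⟩
  rw [← Measure.restrict_congr_set (Ioo_ae_eq_Icc (a := (0:ℝ)) (b := 1)),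
    ae_restrict_iff' measurableSet_Ioo]
  filter_upwards [H] with t Ht ht
  have htI : t ∈ Icc (0:ℝ) 1 := Ioo_subset_Icc_self ht
  have mc : Measurable (fun x => c x t) := ha.1.comp (measurable_id.prodMk measurable_const)
  have hcr : ∀ᵐ x ∂(volume.restrict (box d L)), c x t ∈ Icc (0:ℝ) 1 := by
    filter_upwards [ae_restrict_mem (box_measurable L)] with x hx
    exact ha.2.2.1 x hx t htI
  set lam := (volume.restrict (box d L)).withDensity (fun x => ENNReal.ofReal (c x t)) with hlam
  have hlf : IsFiniteMeasure lam := by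
    refine isFiniteMeasure_withDensity_ofReal (Integrable.hasFiniteIntegral ?_)
    refine Integrable.of_bound mc.aestronglyMeasurable 1 ?_
    filter_upwards [hcr] with x hx
    rw [Real.norm_eq_abs, abs_of_nonneg hx.1]; exact hx.2
  have mS : Measurable (fun y => St ψ t y) := by
    have : Continuous (fun y => St ψ t y) :=
      (St_contOn h.hψ).comp_continuous (f := fun y => (y, t)) (by fun_prop) (fun y => ⟨mem_univ _, ht⟩)
    exact this.measurable
  have mT := h.measTt t
  have hintl : ∀ f : EuclideanSpace ℝ (Fin d) → ℝ, Continuous f →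
      ∫ x, f x ∂(lam.map (fun y => St ψ t y)) = ∫ x in box d L, c x t * f (St ψ t x) := by
    intro f hf
    rw [integral_map mS.aemeasurable hf.aestronglyMeasurable, hlam,
      integral_withDensity_eq_integral_toReal_smul mc.ennreal_ofReal
        (Eventually.of_forall fun _ => ENNReal.ofReal_lt_top)]
    refine integral_congr_ae ?_
    filter_upwards [hcr] with x hx
    rw [ENNReal.toReal_ofReal hx.1, smul_eq_mul]
  have hmap : lam.map (fun y => St ψ t y) = dens ρ₀ := by
    refine Measure.ext_of_charFun ?_
    refine Continuous.ext_on (TopologicalSpace.denseRange_denseSeq (EuclideanSpace ℝ (Fin d)))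
      continuous_charFun continuous_charFun ?_
    rintro _ ⟨n, rfl⟩
    rw [charFun_cos, charFun_cos, hintl _ (by fun_prop), hintl _ (by fun_prop),
      (Ht n ht).1, (Ht n ht).2]
  have hae : ∀ᵐ y ∂lam, HasGradientAt ψ (T (St ψ t y)) (St ψ t y) := by
    have := h.ae_grad
    rw [← hmap] at this
    exact ae_of_ae_map mS.aemeasurable this
  rw [← hmap, Measure.map_map mT mS]
  conv_lhs => rw [← Measure.map_id (μ := lam)]
  refine Measure.map_congr ?_
  filter_upwards [hae] with y hy
  exact (interp_St h.hψ ht hy).symm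

end uniq2

/-- **Theorem 6.2.** For compactly supported densities
`ρ₀, ρ₁ : ℝ^d → [0,1]` in the box `Ω = (−L,L)^d` with equal positive mass, and the
Brenier map `T = ∇ψ` pushing `ρ₀ dx` to `ρ₁ dx` with displacement interpolants
`μ_t = ((1−t)id + tT)_#(ρ₀ dx)`, the infimum of the relaxed kinetic-energy action
`K(c,v) = ∫₀¹∫_Ω ½ c|v|²` over admissible pairs equals `½ d_W(ρ₀ dx, ρ₁ dx)²`; the
infimum is attained by an admissible pair with `c(·,t) dx = μ_t` for all `t`, and every
minimizing admissible pair satisfies `c(·,t) dx = μ_t` for a.e. `t ∈ [0,1]`. -/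
theorem relaxed_two_fluid_least_action
    (d : ℕ) (L : ℝ) (hL : 0 < L)
    (ρ₀ ρ₁ : EuclideanSpace ℝ (Fin d) → ℝ)
    (h₀meas : Measurable ρ₀) (h₁meas : Measurable ρ₁)
    (h₀range : ∀ x, ρ₀ x ∈ Icc (0:ℝ) 1) (h₁range : ∀ x, ρ₁ x ∈ Icc (0:ℝ) 1)
    (h₀supp : HasCompactSupport ρ₀) (h₁supp : HasCompactSupport ρ₁)
    (h₀box : Function.support ρ₀ ⊆ box d L) (h₁box : Function.support ρ₁ ⊆ box d L)
    (hint : ∫ x, ρ₀ x = ∫ x, ρ₁ x) (hposint : 0 < ∫ x, ρ₀ x)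
    (ψ : EuclideanSpace ℝ (Fin d) → ℝ) (hψconv : ConvexOn ℝ Set.univ ψ)
    (T : EuclideanSpace ℝ (Fin d) → EuclideanSpace ℝ (Fin d)) (hT : Measurable T)
    (hgrad : ∀ᵐ x, HasGradientAt ψ (T x) x)
    (hpush : (volume.withDensity fun x => ENNReal.ofReal (ρ₀ x)).map T =
      volume.withDensity fun x => ENNReal.ofReal (ρ₁ x)) :
    (sInf { A | ∃ c v, RelaxedAdmissible L ρ₀ ρ₁ c v ∧
        A = ∫⁻ t in Icc (0:ℝ) 1, ∫⁻ x in box d L,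
          ENNReal.ofReal ((1/2) * (c x t * ‖v x t‖ ^ 2)) } =
      2⁻¹ * W2sq (volume.withDensity fun x => ENNReal.ofReal (ρ₀ x))
        (volume.withDensity fun x => ENNReal.ofReal (ρ₁ x))) ∧
    (∃ c v, RelaxedAdmissible L ρ₀ ρ₁ c v ∧
      (∫⁻ t in Icc (0:ℝ) 1, ∫⁻ x in box d L,
          ENNReal.ofReal ((1/2) * (c x t * ‖v x t‖ ^ 2))) =
        2⁻¹ * W2sq (volume.withDensity fun x => ENNReal.ofReal (ρ₀ x))
          (volume.withDensity fun x => ENNReal.ofReal (ρ₁ x)) ∧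
      ∀ t ∈ Icc (0:ℝ) 1,
        (volume.restrict (box d L)).withDensity (fun x => ENNReal.ofReal (c x t)) =
          (volume.withDensity fun x => ENNReal.ofReal (ρ₀ x)).map
            (fun x => (1 - t) • x + t • T x)) ∧
    (∀ c v, RelaxedAdmissible L ρ₀ ρ₁ c v →
      (∫⁻ t in Icc (0:ℝ) 1, ∫⁻ x in box d L,
          ENNReal.ofReal ((1/2) * (c x t * ‖v x t‖ ^ 2))) =
        2⁻¹ * W2sq (volume.withDensity fun x => ENNReal.ofReal (ρ₀ x))
          (volume.withDensity fun x => ENNReal.ofReal (ρ₁ x)) →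
      ∀ᵐ t ∂(volume.restrict (Icc (0:ℝ) 1)),
        (volume.restrict (box d L)).withDensity (fun x => ENNReal.ofReal (c x t)) =
          (volume.withDensity fun x => ENNReal.ofReal (ρ₀ x)).map
            (fun x => (1 - t) • x + t • T x)) := by
  obtain ⟨x0, hx0⟩ := hgrad.exists
  have h : Setup L ρ₀ ρ₁ ψ T := ⟨hL, h₀meas, h₁meas, h₀range, h₁range, h₀box, h₁box,
    GoodPsi.of_grad hψconv hx0, hT, hgrad, hpush⟩
  refine ⟨le_antisymm ?_ ?_, h.exist, fun c v ha hact => h.uniq ha hact⟩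
  · obtain ⟨c, v, ha, hact, _⟩ := h.exist
    exact sInf_le ⟨c, v, ha, hact.symm⟩
  · refine le_sInf ?_
    rintro A ⟨c, v, ha, rfl⟩
    exact h.lower ha
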